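/- Elliptic 6j-symbols via intertwining vectors: let k ≥ 1 and a, b, c, d ∈ ℤ with a − b = k − 2n and c − d = k − 2m for some integers 0 ≤ n, m ≤ k, with min(c,d) > k; assume r is irrational and u ∈ ℂ is such that every bracket appearing in a denominator (in the dual intertwining vectors along all paths from c to d and in R_n^m) is nonzero. Then Σ_{μ ∈ {−k,−k+2,…,k}} ψ*^{(k)}_μ(u)^d_c · ψ^{(k)}_μ(u)^a_b = R_n^m(α,β,γ,δ;k), where α = (−u+a−k+1)/2, β = (−u−a−k+1)/2, γ = (−u+c−k+1)/2, δ = (−u−c−k+1)/2. -/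

import Mathlib

noncomputable section

open Complex Finset

namespace Ell

/-- `x^s = exp(-iπ s /(r τ))`. -/
def xp (τ : ℂ) (r : ℝ) (s : ℂ) : ℂ :=
  Complex.exp (-Complex.I * (Real.pi : ℂ) * s / ((r : ℂ) * τ))

/-- `Θ_p(z) = ∏_{j ≥ 0} (1 - z p^j)(1 - p^{j+1}/z)(1 - p^{j+1})`. -/
def Theta (p z : ℂ) : ℂ :=
  ∏' j : ℕ, ((1 - z * p ^ j) * (1 - p ^ (j + 1) / z) * (1 - p ^ (j + 1)))

/-- The bracket `[u] = x^{u²/r - u} Θ_p(x^{2u})` with `p = x^{2r}`. -/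
def br (τ : ℂ) (r : ℝ) (u : ℂ) : ℂ :=
  xp τ r (u ^ 2 / (r : ℂ) - u) * Theta (xp τ r (2 * (r : ℂ))) (xp τ r (2 * u))

/-- Elliptic shifted factorial `[u]_n = ∏_{j=0}^{n-1} [u+j]`. -/
def brF (τ : ℂ) (r : ℝ) (u : ℂ) (n : ℕ) : ℂ :=
  ∏ j ∈ Finset.range n, br τ r (u + (j : ℂ))

/-- Elliptic binomial coefficient `C_n^k(α,β,γ)`. -/
def Cnk (τ : ℂ) (r : ℝ) (k n : ℕ) (α β γ : ℂ) : ℂ :=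
  brF τ r 1 k / (brF τ r 1 n * brF τ r 1 (k - n)) *
    (brF τ r (α - γ) n * brF τ r (α + γ + (k : ℂ) - (n : ℂ)) n *
      brF τ r (α - β) (k - n) * brF τ r (α + β + (n : ℂ)) (k - n)) /
    (brF τ r (β - γ + (n : ℂ) - (k : ℂ)) n * brF τ r (γ - β - (n : ℂ)) (k - n) *
      brF τ r (β + γ) k)

/-- The elliptic 6j-symbol `R_n^m(α,β,γ,δ;k)`. -/
def Rnm (τ : ℂ) (r : ℝ) (k n m : ℕ) (α β γ δ : ℂ) : ℂ :=
  ∑ j ∈ Finset.range (min n m + 1),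
    Cnk τ r n j α γ (β + (k : ℂ) - (n : ℂ)) * Cnk τ r (k - j) (m - j) β (γ + (j : ℂ)) δ

/-- Terminating very-well-poised elliptic hypergeometric sum with explicit
truncation `N`:  `Σ_{j=0}^N ([u₀+2j]/[u₀]) ([u₀]_j/[1]_j) ∏ᵢ [uᵢ]_j/[u₀+1-uᵢ]_j`. -/
def Vsum (τ : ℂ) (r : ℝ) (u₀ : ℂ) (us : List ℂ) (N : ℕ) : ℂ :=
  ∑ j ∈ Finset.range (N + 1),
    br τ r (u₀ + 2 * (j : ℂ)) / br τ r u₀ * (brF τ r u₀ j / brF τ r 1 j) *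
      (us.map fun ui => brF τ r ui j / brF τ r (u₀ + 1 - ui) j).prod

/-- "Every bracket appearing in a denominator of `C_n^k(·,β,γ)` is nonzero". -/
def CdenomNZ (τ : ℂ) (r : ℝ) (k n : ℕ) (β γ : ℂ) : Prop :=
  brF τ r 1 n ≠ 0 ∧ brF τ r 1 (k - n) ≠ 0 ∧
    brF τ r (β - γ + (n : ℂ) - (k : ℂ)) n ≠ 0 ∧
    brF τ r (γ - β - (n : ℂ)) (k - n) ≠ 0 ∧ brF τ r (β + γ) k ≠ 0

/-- "Every bracket appearing in a denominator of `R_n^m(α,β,γ,δ;k)` is nonzero". -/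
def RdenomNZ (τ : ℂ) (r : ℝ) (k n m : ℕ) (β γ δ : ℂ) : Prop :=
  ∀ j ≤ min n m,
    CdenomNZ τ r n j γ (β + (k : ℂ) - (n : ℂ)) ∧
      CdenomNZ τ r (k - j) (m - j) (γ + (j : ℂ)) δ

/-- Jacobi theta `ϑ₁(v|σ)`. -/
def th1 (v σ : ℂ) : ℂ :=
  2 * Complex.exp (2 * (Real.pi : ℂ) * Complex.I * σ / 8) *
    (∏' n : ℕ, (1 - Complex.exp (2 * (Real.pi : ℂ) * Complex.I * σ) ^ (n + 1))) *
    Complex.sin ((Real.pi : ℂ) * v) *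
    ∏' n : ℕ,
      (1 - 2 * Complex.exp (2 * (Real.pi : ℂ) * Complex.I * σ) ^ (n + 1) *
            Complex.cos (2 * (Real.pi : ℂ) * v) +
        Complex.exp (2 * (Real.pi : ℂ) * Complex.I * σ) ^ (2 * (n + 1)))

/-- Jacobi theta `ϑ₀(v|σ)`. -/
def th0 (v σ : ℂ) : ℂ :=
  -Complex.I * Complex.exp ((Real.pi : ℂ) * Complex.I * (v + σ / 4)) * th1 (v + σ / 2) σ

/-- Jacobi theta `ϑ₂(v|σ)`. -/
def th2 (v σ : ℂ) : ℂ := th1 (v + 1 / 2) σ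

/-- Jacobi theta `ϑ₃(v|σ)`. -/
def th3 (v σ : ℂ) : ℂ :=
  Complex.exp ((Real.pi : ℂ) * Complex.I * (v + σ / 4)) * th1 (v + (σ + 1) / 2) σ

/-- Intertwining vector component `ψ_ε(u)^a_b`, `ε ∈ {1, -1}`. -/
def psi (τ : ℂ) (r : ℝ) (u : ℂ) (ε : ℤ) (a b : ℤ) : ℂ :=
  if ε = 1 then th0 ((((a : ℂ) - (b : ℂ)) * u + (a : ℂ)) / (2 * (r : ℂ))) (τ / 2)
  else th3 ((((a : ℂ) - (b : ℂ)) * u + (a : ℂ)) / (2 * (r : ℂ))) (τ / 2)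

/-- The constant `C = x^{-r/4} e^{-iπ/4} τ^{1/2}`. -/
def Cc (τ : ℂ) (r : ℝ) : ℂ :=
  xp τ r (-(r : ℂ) / 4) * Complex.exp (-(Real.pi : ℂ) * Complex.I / 4) * τ ^ (1 / 2 : ℂ)

/-- Dual intertwining vector component `ψ*_ε(u)^a_b = -ε(a-b) C² ψ_{-ε}(u-1)^a_b/(2[b][u])`. -/
def psiStar (τ : ℂ) (r : ℝ) (u : ℂ) (ε : ℤ) (a b : ℤ) : ℂ :=
  -(ε : ℂ) * ((a : ℂ) - (b : ℂ)) * Cc τ r ^ 2 * psi τ r (u - 1) (-ε) a b /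
    (2 * br τ r (b : ℂ) * br τ r u)

/-- Sign attached to a boolean. -/
def sg (b : Bool) : ℤ := if b then 1 else -1

/-- Canonical path from `a`: up for `j ≤ n`, down afterwards. -/
def cpathZ (a n : ℤ) (j : ℕ) : ℤ := if (j : ℤ) ≤ n then a + j else a + 2 * n - j

/-- Admissibility: `a - b ∈ {-k, -k+2, …, k}`. -/
def adm (k : ℕ) (a b : ℤ) : Prop := (a - b).natAbs ≤ k ∧ (a - b - (k : ℤ)) % 2 = 0

instance (k : ℕ) (a b : ℤ) : Decidable (adm k a b) := by unfold adm; infer_instance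

/-- Fused intertwining vector component `ψ^{(k)}_μ(u)^a_b` (zero if `a,b` not admissible). -/
def psiF (τ : ℂ) (r : ℝ) (k : ℕ) (μ : ℤ) (u : ℂ) (a b : ℤ) : ℂ :=
  if adm k a b then
    ∑ ε ∈ Finset.univ.filter fun ε : Fin k → Bool => (∑ j, sg (ε j)) = μ,
      ∏ j : Fin k,
        psi τ r (u + (k : ℂ) - (((j : ℕ) + 1 : ℕ) : ℂ)) (sg (ε j))
          (cpathZ a (((k : ℤ) - (a - b)) / 2) (j : ℕ))
          (cpathZ a (((k : ℤ) - (a - b)) / 2) ((j : ℕ) + 1))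
  else 0

/-- Partial-sum path attached to a sign sequence `δ`, starting at `a`. -/
def spath (k : ℕ) (a : ℤ) (δ : Fin k → Bool) (j : ℕ) : ℤ :=
  a + ∑ i ∈ Finset.range j, if h : i < k then sg (δ ⟨i, h⟩) else 0

/-- Fused dual intertwining vector component `ψ*^{(k)}_μ(u)^b_a`
(sum over all admissible paths from `a` to `b`; zero if not admissible). -/
def psiStarF (τ : ℂ) (r : ℝ) (k : ℕ) (μ : ℤ) (u : ℂ) (b a : ℤ) : ℂ :=
  if adm k a b then
    ∑ δ ∈ Finset.univ.filter fun δ : Fin k → Bool => (∑ j, sg (δ j)) = b - a,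
      ∏ j : Fin k,
        psiStar τ r (u + (k : ℂ) - (((j : ℕ) + 1 : ℕ) : ℂ))
          (if ((j : ℕ) + 1 : ℤ) ≤ ((k : ℤ) + μ) / 2 then 1 else -1)
          (spath k a δ ((j : ℕ) + 1)) (spath k a δ (j : ℕ))
  else 0

/-- The `L`-matrix `L^{(k)}(a,b;c,d|u) = Σ_μ ψ*^{(k)}_μ(u)^d_c ψ^{(k)}_μ(u)^a_b`. -/
def Lk (τ : ℂ) (r : ℝ) (k : ℕ) (u : ℂ) (a b c d : ℤ) : ℂ :=
  ∑ i ∈ Finset.range (k + 1),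
    psiStarF τ r k ((k : ℤ) - 2 * (i : ℤ)) u d c * psiF τ r k ((k : ℤ) - 2 * (i : ℤ)) u a b

/-- Normalized face weight `W̄(a,b;d,c|u)` (arguments ordered (NW, NE; SW, SE)). -/
def Wb (τ : ℂ) (r : ℝ) (u : ℂ) (a b d c : ℤ) : ℂ :=
  if b = a + 1 ∧ d = a + 1 ∧ c = a + 2 then 1
  else if b = a - 1 ∧ d = a - 1 ∧ c = a - 2 then 1
  else if b = a + 1 ∧ d = a + 1 ∧ c = a then
    br τ r ((a : ℂ) - u) * br τ r 1 / (br τ r (a : ℂ) * br τ r (1 + u))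
  else if b = a - 1 ∧ d = a - 1 ∧ c = a then
    br τ r ((a : ℂ) + u) * br τ r 1 / (br τ r (a : ℂ) * br τ r (1 + u))
  else if b = a + 1 ∧ d = a - 1 ∧ c = a then
    br τ r ((a : ℂ) + 1) * br τ r u / (br τ r (a : ℂ) * br τ r (1 + u))
  else if b = a - 1 ∧ d = a + 1 ∧ c = a then
    br τ r ((a : ℂ) - 1) * br τ r u / (br τ r (a : ℂ) * br τ r (1 + u))
  else 0

/-- Sequence with prescribed endpoints `d`, `c` and free interior values `f`. -/
def seqI (k : ℕ) (d c : ℤ) (f : Fin (k - 1) → ℤ) (j : ℕ) : ℤ :=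
  if h0 : j = 0 then d
  else if hj : j < k then f ⟨j - 1, by omega⟩ else c

/-- Fused face weight `W^{(k,1)}(a,b;d,c|u)`. -/
def Wk1 (τ : ℂ) (r : ℝ) (k : ℕ) (u : ℂ) (a b d c : ℤ) : ℂ :=
  if adm k a b then
    ∑' f : Fin (k - 1) → ℤ,
      ∏ j ∈ Finset.range k,
        Wb τ r (u + (k : ℂ) - ((j : ℂ) + 1))
          (cpathZ a (((k : ℤ) - (a - b)) / 2) j)
          (cpathZ a (((k : ℤ) - (a - b)) / 2) (j + 1))
          (seqI k d c f j) (seqI k d c f (j + 1))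
  else 0

/-- Fused face weight `W^{(k,l)}(a,b;d,c|u)`. -/
def Wkl (τ : ℂ) (r : ℝ) (k l : ℕ) (u : ℂ) (a b d c : ℤ) : ℂ :=
  if adm l b c then
    ∑' g : Fin (l - 1) → ℤ,
      ∏ i ∈ Finset.range l,
        Wk1 τ r k (u - (l : ℂ) + ((i : ℂ) + 1))
          (seqI l a d g i) (cpathZ b (((l : ℤ) - (b - c)) / 2) i)
          (seqI l a d g (i + 1)) (cpathZ b (((l : ℤ) - (b - c)) / 2) (i + 1))
  else 0

/-- Eight-vertex weight `ā(u)`. -/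
def aw (τ : ℂ) (r : ℝ) (u : ℂ) : ℂ :=
  th2 (1 / (2 * (r : ℂ))) (τ / 2) * th2 (u / (2 * (r : ℂ))) (τ / 2) /
    (th2 0 (τ / 2) * th2 ((1 + u) / (2 * (r : ℂ))) (τ / 2))

/-- Eight-vertex weight `b̄(u)`. -/
def bw (τ : ℂ) (r : ℝ) (u : ℂ) : ℂ :=
  th2 (1 / (2 * (r : ℂ))) (τ / 2) * th1 (u / (2 * (r : ℂ))) (τ / 2) /
    (th2 0 (τ / 2) * th1 ((1 + u) / (2 * (r : ℂ))) (τ / 2))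

/-- Eight-vertex weight `c̄(u)`. -/
def cw (τ : ℂ) (r : ℝ) (u : ℂ) : ℂ :=
  th1 (1 / (2 * (r : ℂ))) (τ / 2) * th2 (u / (2 * (r : ℂ))) (τ / 2) /
    (th2 0 (τ / 2) * th1 ((1 + u) / (2 * (r : ℂ))) (τ / 2))

/-- Eight-vertex weight `d̄(u)`. -/
def dw (τ : ℂ) (r : ℝ) (u : ℂ) : ℂ :=
  -(th1 (1 / (2 * (r : ℂ))) (τ / 2) * th1 (u / (2 * (r : ℂ))) (τ / 2)) /
    (th2 0 (τ / 2) * th2 ((1 + u) / (2 * (r : ℂ))) (τ / 2))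

/-- The normalized eight-vertex `R`-matrix entry `R̄(u)_{(ε₁,ε₂),(ε₁',ε₂')}`. -/
def Rbar (τ : ℂ) (r : ℝ) (u : ℂ) (e1 e2 e1' e2' : ℤ) : ℂ :=
  if e1' = e1 ∧ e2' = e2 ∧ e1 = e2 then aw τ r u
  else if e1' = e1 ∧ e2' = e2 ∧ e1 = -e2 then bw τ r u
  else if e1' = e2 ∧ e2' = e1 ∧ e1 = -e2 then cw τ r u
  else if e1' = -e1 ∧ e2' = -e2 ∧ e1 = e2 then dw τ r u
  else 0

/-- Sklyanin standard-basis vector `v_+(z)`. -/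
def vp (τ z : ℂ) : ℂ := th3 (2 * z) (2 * τ) - th2 (2 * z) (2 * τ)

/-- Sklyanin standard-basis vector `v_-(z)`. -/
def vm (τ z : ℂ) : ℂ := th3 (2 * z) (2 * τ) + th2 (2 * z) (2 * τ)

/-!
The triple product and the modular transformation of the theta function identify `[u]` with a
multiple of `ϑ₁(u/r|τ)`, and turn the determinant of two vectors `(ϑ₀, ϑ₃)` into a product of two
brackets: up to a constant, `v(x) ∧ v(y)` is `[x + y][x - y]`. The dual intertwining vectors,
being determinants against such vectors, define a sum over the paths from `c` to `d` that is
multilinear in `k` vectors of `ℂ²`. By the Plücker relation this path sum is symmetric in these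
vectors, so the left-hand side is its value at the theta vectors of the canonical path from `a`
to `b`, whose arguments form two arithmetic progressions, starting at `α` and at `β`.

A theta vector at `(±c - u - k + 1)/2` forces the first step from `c`. Expanding a progression in
such forcing vectors gives an elliptic binomial theorem with coefficients `C_n^k`: the Weierstrass
three-term identity, again a Plücker relation, is what makes them satisfy a Pascal recursion.
Applying the theorem to the first progression and then to the second yields `R_n^m`.
-/

section QBinomial

variable {R : Type*} [CommRing R]

/-- The finite `q`-Pochhammer symbol `(q; q)_n`. -/
def qPoch (q : R) (n : ℕ) : R := ∏ j ∈ range n, (1 - q ^ (j + 1))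

/-- The Gaussian binomial coefficient, defined by the `q`-Pascal recursion so that it makes sense
in every commutative ring. -/
def qBinom (q : R) : ℕ → ℕ → R
  | _, 0 => 1
  | 0, _ + 1 => 0
  | n + 1, k + 1 => qBinom q n k + q ^ (k + 1) * qBinom q n (k + 1)

@[simp] lemma qBinom_zero_right (q : R) (n : ℕ) : qBinom q n 0 = 1 := by
  cases n <;> rfl

lemma qBinom_succ_succ (q : R) (n k : ℕ) :
    qBinom q (n + 1) (k + 1) = qBinom q n k + q ^ (k + 1) * qBinom q n (k + 1) := rfl

lemma qBinom_eq_zero_of_lt (q : R) {n k : ℕ} (h : n < k) : qBinom q n k = 0 := by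
  induction n generalizing k with
  | zero => obtain ⟨k, rfl⟩ := Nat.exists_eq_add_of_lt h; rfl
  | succ n ih =>
    obtain ⟨k, rfl⟩ := Nat.exists_eq_succ_of_ne_zero (Nat.ne_zero_of_lt h)
    rw [qBinom_succ_succ, ih (by omega), ih (by omega), mul_zero, add_zero]

lemma qPoch_succ (q : R) (n : ℕ) : qPoch q (n + 1) = qPoch q n * (1 - q ^ (n + 1)) :=
  prod_range_succ _ _

lemma qBinom_self (q : R) (n : ℕ) : qBinom q n n = 1 := by
  induction n with
  | zero => rfl
  | succ n ih =>
    rw [qBinom_succ_succ, ih, qBinom_eq_zero_of_lt q n.lt_succ_self, mul_zero, add_zero]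

lemma qBinom_add_mul_qPoch (q : R) (k l : ℕ) :
    qBinom q (k + l) k * (qPoch q k * qPoch q l) = qPoch q (k + l) := by
  obtain ⟨n, hn⟩ : ∃ n, n = k + l := ⟨_, rfl⟩
  induction n generalizing k l with
  | zero =>
    obtain ⟨rfl, rfl⟩ : k = 0 ∧ l = 0 := by omega
    simp [qPoch]
  | succ n ih =>
    rcases k with _ | k
    · simp [qPoch]
    rcases l with _ | l
    · simp [qBinom_self, qPoch]
    have hleft := ih k (l + 1) (by omega)
    have hright := ih (k + 1) l (by omega)
    rw [show k + 1 + l = k + (l + 1) by omega] at hright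
    rw [show k + 1 + (l + 1) = k + (l + 1) + 1 by omega, qBinom_succ_succ, qPoch_succ q (k + _)]
    simp only [qPoch_succ] at hleft hright ⊢
    linear_combination (1 - q ^ (k + 1)) * hleft + q ^ (k + 1) * (1 - q ^ (l + 1)) * hright

theorem prod_one_add_mul_pow_eq_sum_qBinom (q x : R) (n : ℕ) :
    ∏ j ∈ range n, (1 + x * q ^ j) =
      ∑ k ∈ range (n + 1), q ^ k.choose 2 * qBinom q n k * x ^ k := by
  induction n generalizing x with
  | zero => simp
  | succ n ih =>
    have htail : ∏ j ∈ range n, (1 + x * q ^ (j + 1)) =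
        ∑ k ∈ range (n + 1), q ^ (k + 1).choose 2 * qBinom q n k * x ^ k := by
      simp only [pow_succ', ← mul_assoc, ih (x * q)]
      refine sum_congr rfl fun k _ => ?_
      rw [Nat.choose_succ_succ' k 1, Nat.choose_one_right]
      ring
    have htail' : ∑ k ∈ range (n + 1), q ^ (k + 1).choose 2 * qBinom q n k * x ^ k =
        ∑ k ∈ range (n + 1), q ^ (k + 2).choose 2 * qBinom q n (k + 1) * x ^ (k + 1) + 1 := by
      rw [sum_range_succ', sum_range_succ _ n, qBinom_eq_zero_of_lt q n.lt_succ_self]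
      simp
    rw [prod_range_succ', htail, pow_zero, mul_one, mul_add, mul_one, sum_range_succ' _ (n + 1),
      sum_mul]
    nth_rw 1 [htail']
    simp only [Nat.choose_zero_succ, pow_zero, qBinom_zero_right, mul_one]
    rw [add_right_comm, ← sum_add_distrib]
    congr 1
    refine sum_congr rfl fun k _ => ?_
    rw [qBinom_succ_succ, Nat.choose_succ_succ' (k + 1) 1, Nat.choose_one_right]
    ring

end QBinomial

lemma prod_range_two_mul_one_sub {K : Type*} [Field K] {q z : K} (hq : q ≠ 0) (hz : z ≠ 0)
    (N : ℕ) :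
    ∏ j ∈ range (2 * N), (1 + -z / q ^ N * q ^ j) =
      (-z) ^ N / q ^ (N + 1).choose 2 *
        ∏ j ∈ range N, ((1 - z * q ^ j) * (1 - q ^ (j + 1) / z)) := by
  have hlow : ∏ j ∈ range N, (1 + -z / q ^ N * q ^ (N - 1 - j)) =
      (-z) ^ N / q ^ (N + 1).choose 2 * ∏ j ∈ range N, (1 - q ^ (j + 1) / z) := by
    have hpow : (-z) ^ N / q ^ (N + 1).choose 2 = ∏ j ∈ range N, -z / q ^ (j + 1) := by
      rw [prod_div_distrib, prod_const, card_range, prod_pow_eq_pow_sum, Nat.choose_two_right,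
        ← sum_range_id, sum_range_succ', add_zero]
    rw [hpow, ← prod_mul_distrib]
    refine prod_congr rfl fun j hj => ?_
    obtain ⟨l, rfl⟩ := Nat.exists_eq_add_of_lt (mem_range.mp hj)
    rw [show j + l + 1 - 1 - j = l by omega]
    field_simp
    ring
  have hhigh : ∀ j, 1 + -z / q ^ N * q ^ (N + j) = 1 - z * q ^ j := fun j => by
    rw [pow_add]; field_simp; ring
  rw [two_mul, prod_range_add, prod_mul_distrib, ← prod_range_reflect, hlow]
  simp only [hhigh]
  ring

section TripleProduct

open Filter Topology

variable {q : ℂ}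

lemma one_sub_pow_succ_ne_zero (hq : ‖q‖ < 1) (n : ℕ) : 1 - q ^ (n + 1) ≠ 0 := fun h =>
  (pow_lt_one₀ (norm_nonneg q) hq n.succ_ne_zero).ne <| by
    rw [← norm_pow, ← sub_eq_zero.mp h, norm_one]

lemma qPoch_ne_zero (hq : ‖q‖ < 1) (n : ℕ) : qPoch q n ≠ 0 :=
  prod_ne_zero_iff.mpr fun j _ => one_sub_pow_succ_ne_zero hq j

lemma qBinom_add_left (hq : ‖q‖ < 1) (k l : ℕ) :
    qBinom q (k + l) k = qPoch q (k + l) / (qPoch q k * qPoch q l) :=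
  eq_div_of_mul_eq (mul_ne_zero (qPoch_ne_zero hq k) (qPoch_ne_zero hq l))
    (qBinom_add_mul_qPoch q k l)

lemma multipliable_one_sub_mul_pow (hq : ‖q‖ < 1) (z : ℂ) :
    Multipliable fun j : ℕ => 1 - z * q ^ j := by
  simp only [sub_eq_add_neg]
  refine multipliable_one_add_of_summable ?_
  simp only [norm_neg, norm_mul, norm_pow]
  exact (summable_geometric_of_lt_one (norm_nonneg q) hq).mul_left _

lemma multipliable_one_sub_pow_succ_div (hq : ‖q‖ < 1) (z : ℂ) :
    Multipliable fun j : ℕ => 1 - q ^ (j + 1) / z :=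
  (multipliable_one_sub_mul_pow hq (q / z)).congr fun j => by ring

lemma tprod_one_sub_pow_succ_ne_zero (hq : ‖q‖ < 1) : ∏' j : ℕ, (1 - q ^ (j + 1)) ≠ 0 := by
  simp only [sub_eq_add_neg]
  refine tprod_one_add_ne_zero_of_summable
    (fun j => by simpa only [sub_eq_add_neg] using one_sub_pow_succ_ne_zero hq j) ?_
  simp only [norm_neg, norm_pow]
  exact (summable_nat_add_iff 1).mpr (summable_geometric_of_lt_one (norm_nonneg q) hq)

lemma tendsto_qPoch (hq : ‖q‖ < 1) :
    Tendsto (qPoch q) atTop (𝓝 (∏' j : ℕ, (1 - q ^ (j + 1)))) :=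
  (ModularForm.multipliable_one_sub_pow hq).tendsto_prod_tprod_nat

lemma exists_norm_qBinom_le (hq : ‖q‖ < 1) : ∃ B, ∀ n k, ‖qBinom q n k‖ ≤ B := by
  obtain ⟨B, hB⟩ := (tendsto_qPoch hq).norm.bddAbove_range
  obtain ⟨B', hB'⟩ :=
    ((tendsto_qPoch hq).inv₀ (tprod_one_sub_pow_succ_ne_zero hq)).norm.bddAbove_range
  replace hB : ∀ n, ‖qPoch q n‖ ≤ B := fun n => hB ⟨n, rfl⟩
  replace hB' : ∀ n, ‖(qPoch q n)⁻¹‖ ≤ B' := fun n => hB' ⟨n, rfl⟩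
  have hB_nonneg : 0 ≤ B := (norm_nonneg _).trans (hB 0)
  have hB'_nonneg : 0 ≤ B' := (norm_nonneg _).trans (hB' 0)
  refine ⟨B * (B' * B'), fun n k => ?_⟩
  rcases lt_or_ge n k with hnk | hkn
  · rw [qBinom_eq_zero_of_lt q hnk, norm_zero]
    positivity
  · obtain ⟨l, rfl⟩ := Nat.exists_eq_add_of_le hkn
    rw [qBinom_add_left hq, div_eq_mul_inv, mul_inv, norm_mul, norm_mul]
    gcongr
    exacts [hB _, hB' _, hB' _]

lemma tendsto_toNat_natCast_add (n : ℤ) : Tendsto (fun N : ℕ => ((N : ℤ) + n).toNat) atTop atTop :=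
  tendsto_atTop.mpr fun b => (eventually_ge_atTop (b + n.natAbs)).mono fun N hN => by omega

lemma tendsto_qBinom_two_mul (hq : ‖q‖ < 1) (n : ℤ) :
    Tendsto (fun N : ℕ => qBinom q (2 * N) ((N : ℤ) + n).toNat) atTop
      (𝓝 (∏' j : ℕ, (1 - q ^ (j + 1)))⁻¹) := by
  have hL := tendsto_qPoch hq
  have hL0 := tprod_one_sub_pow_succ_ne_zero hq
  set L := ∏' j : ℕ, (1 - q ^ (j + 1))
  have htwo : Tendsto (fun N : ℕ => 2 * N) atTop atTop :=
    tendsto_id.const_mul_atTop' two_pos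
  have hlim := (hL.comp htwo).div
    ((hL.comp (tendsto_toNat_natCast_add n)).mul (hL.comp (tendsto_toNat_natCast_add (-n))))
    (mul_ne_zero hL0 hL0)
  rw [div_mul_cancel_left₀ hL0] at hlim
  refine hlim.congr' ((eventually_ge_atTop n.natAbs).mono fun N hN => ?_)
  have hsplit : 2 * N = ((N : ℤ) + n).toNat + ((N : ℤ) + -n).toNat := by omega
  simp only [Pi.div_apply, Function.comp_apply]
  rw [hsplit, qBinom_add_left hq]

lemma tendsto_sum_qBinom_mul (hq : ‖q‖ < 1) {T : ℤ → ℂ} (hT : Summable T) :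
    Tendsto (fun N : ℕ => ∑ k ∈ range (2 * N + 1), qBinom q (2 * N) k * T ((k : ℤ) - N)) atTop
      (𝓝 ((∏' j : ℕ, (1 - q ^ (j + 1)))⁻¹ * ∑' n, T n)) := by
  let f : ℕ → ℤ → ℂ := fun N n =>
    if n.natAbs ≤ N then qBinom q (2 * N) ((N : ℤ) + n).toNat * T n else 0
  have hsum (N : ℕ) : ∑ k ∈ range (2 * N + 1), qBinom q (2 * N) k * T ((k : ℤ) - N) =
      ∑' n, f N n := by
    rw [tsum_eq_sum (s := Icc (-(N : ℤ)) N)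
      fun n hn => if_neg (by rw [mem_Icc] at hn; omega)]
    refine sum_bij' (fun k _ => (k : ℤ) - N) (fun n _ => ((N : ℤ) + n).toNat) ?_ ?_ ?_ ?_ ?_
    all_goals simp only [mem_range, mem_Icc]; intro k hk
    · omega
    · omega
    · omega
    · omega
    · rw [if_pos (by omega), add_sub_cancel, Int.toNat_natCast]
  obtain ⟨B, hB⟩ := exists_norm_qBinom_le hq
  simp only [hsum, ← tsum_mul_left]
  refine tendsto_tsum_of_dominated_convergence (hT.norm.mul_left B) (fun n => ?_)
    (.of_forall fun N n => ?_)
  · exact ((tendsto_qBinom_two_mul hq n).mul_const (T n)).congr'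
      ((eventually_ge_atTop n.natAbs).mono fun N hN => (if_pos hN).symm)
  · dsimp only [f]
    split_ifs
    · rw [norm_mul]
      exact mul_le_mul_of_nonneg_right (hB _ _) (norm_nonneg _)
    · rw [norm_zero]
      exact mul_nonneg ((norm_nonneg _).trans (hB 0 0)) (norm_nonneg _)

lemma norm_exp_two_pi_mul_I_mul_lt_one {σ : ℂ} (hσ : 0 < σ.im) :
    ‖cexp (2 * Real.pi * I * σ)‖ < 1 :=
  UpperHalfPlane.norm_exp_two_pi_I_lt_one ⟨σ, hσ⟩

lemma qPow_choose_two_mul_eq_jacobiTheta₂_term (σ w : ℂ) (N k : ℕ) :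
    cexp (2 * Real.pi * I * σ) ^ k.choose 2 *
        (-cexp (2 * Real.pi * I * w) / cexp (2 * Real.pi * I * σ) ^ N) ^ k =
      (-cexp (2 * Real.pi * I * w)) ^ N / cexp (2 * Real.pi * I * σ) ^ (N + 1).choose 2 *
        jacobiTheta₂_term ((k : ℤ) - N) (w + 1 / 2 - σ / 2) σ := by
  have hneg : -cexp (2 * Real.pi * I * w) = cexp (2 * Real.pi * I * w + Real.pi * I) := by
    rw [Complex.exp_add, exp_pi_mul_I, mul_neg_one]
  rw [hneg, jacobiTheta₂_term]
  simp only [← Complex.exp_nat_mul, ← Complex.exp_sub, ← Complex.exp_add, Nat.cast_choose_two]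
  congr 1
  push_cast
  ring

lemma prod_range_eq_sum_qBinom_mul_jacobiTheta₂_term (σ w : ℂ) (N : ℕ) :
    ∏ j ∈ range N, ((1 - cexp (2 * Real.pi * I * w) * cexp (2 * Real.pi * I * σ) ^ j) *
        (1 - cexp (2 * Real.pi * I * σ) ^ (j + 1) / cexp (2 * Real.pi * I * w))) =
      ∑ k ∈ range (2 * N + 1), qBinom (cexp (2 * Real.pi * I * σ)) (2 * N) k *
        jacobiTheta₂_term ((k : ℤ) - N) (w + 1 / 2 - σ / 2) σ := by
  have hterm := qPow_choose_two_mul_eq_jacobiTheta₂_term σ w N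
  have hprod := prod_range_two_mul_one_sub (exp_ne_zero (2 * Real.pi * I * σ))
    (exp_ne_zero (2 * Real.pi * I * w)) N
  have hcoef : (-cexp (2 * Real.pi * I * w)) ^ N /
      cexp (2 * Real.pi * I * σ) ^ (N + 1).choose 2 ≠ 0 :=
    div_ne_zero (pow_ne_zero _ (neg_ne_zero.mpr (exp_ne_zero _))) (pow_ne_zero _ (exp_ne_zero _))
  refine mul_left_cancel₀ hcoef ?_
  rw [← hprod, prod_one_add_mul_pow_eq_sum_qBinom, mul_sum]
  refine sum_congr rfl fun k _ => ?_
  rw [mul_right_comm, hterm]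
  ring

/-- The Jacobi triple product, as the limit `N → ∞` of Gauss's binomial formula for
`∏_{j < 2N} (1 - z q^{j-N})`. -/
theorem Theta_exp_eq_jacobiTheta₂ {σ : ℂ} (hσ : 0 < σ.im) (w : ℂ) :
    Theta (cexp (2 * Real.pi * I * σ)) (cexp (2 * Real.pi * I * w)) =
      jacobiTheta₂ (w + 1 / 2 - σ / 2) σ := by
  have hq := norm_exp_two_pi_mul_I_mul_lt_one hσ
  have hfin := prod_range_eq_sum_qBinom_mul_jacobiTheta₂_term σ w
  set q := cexp (2 * Real.pi * I * σ)
  set z := cexp (2 * Real.pi * I * w)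
  have hinfinite := (((multipliable_one_sub_mul_pow hq z).mul
    (multipliable_one_sub_pow_succ_div hq z)).mul
      (ModularForm.multipliable_one_sub_pow hq)).tendsto_prod_tprod_nat
  have hseries := (tendsto_sum_qBinom_mul hq
    ((summable_jacobiTheta₂_term_iff (w + 1 / 2 - σ / 2) σ).mpr hσ)).mul (tendsto_qPoch hq)
  rw [mul_right_comm, inv_mul_cancel₀ (tprod_one_sub_pow_succ_ne_zero hq), one_mul] at hseries
  simp only [prod_mul_distrib (g := fun j => 1 - q ^ (j + 1)), hfin] at hinfinite
  exact tendsto_nhds_unique hinfinite hseries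

end TripleProduct

section JacobiTheta

lemma Theta_eq_one_sub_mul_tprod {q z : ℂ} (hq : ‖q‖ < 1) (hz : z ≠ 0) :
    Theta q z = (1 - z) *
      (∏' n : ℕ, (1 - 2 * q ^ (n + 1) * ((z + z⁻¹) / 2) + q ^ (2 * (n + 1)))) *
      ∏' n : ℕ, (1 - q ^ (n + 1)) := by
  have hz_shift : Multipliable fun j : ℕ => 1 - z * q ^ (j + 1) :=
    (multipliable_one_sub_mul_pow hq (z * q)).congr fun j => by ring
  have hz_inv := multipliable_one_sub_pow_succ_div hq z
  have hz_prod := multipliable_one_sub_mul_pow hq z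
  have hpair : ∏' n : ℕ, (1 - 2 * q ^ (n + 1) * ((z + z⁻¹) / 2) + q ^ (2 * (n + 1))) =
      (∏' j : ℕ, (1 - z * q ^ (j + 1))) * ∏' j : ℕ, (1 - q ^ (j + 1) / z) := by
    rw [← hz_shift.tprod_mul hz_inv]
    refine tprod_congr fun n => ?_
    field_simp
    ring
  have hfirst : ∏' j : ℕ, (1 - z * q ^ j) = (1 - z) * ∏' j : ℕ, (1 - z * q ^ (j + 1)) := by
    rw [tprod_eq_zero_mul' (f := fun j : ℕ => 1 - z * q ^ j) hz_shift, pow_zero, mul_one]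
  rw [Theta, (hz_prod.mul hz_inv).tprod_mul (ModularForm.multipliable_one_sub_pow hq),
    hz_prod.tprod_mul hz_inv, hfirst, hpair]
  ring

lemma th1_eq_jacobiTheta₂ {σ : ℂ} (hσ : 0 < σ.im) (v : ℂ) :
    th1 v σ = I * cexp (Real.pi * I * (σ / 4 - v)) * jacobiTheta₂ (v + 1 / 2 - σ / 2) σ := by
  have hcos : Complex.cos (2 * Real.pi * v) =
      (cexp (2 * Real.pi * I * v) + (cexp (2 * Real.pi * I * v))⁻¹) / 2 := by
    rw [Complex.cos, ← Complex.exp_neg]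
    ring_nf
  have hsin : 2 * Complex.sin (Real.pi * v) =
      I * (cexp (-(Real.pi * I * v)) * (1 - cexp (2 * Real.pi * I * v))) := by
    rw [Complex.sin, mul_sub, ← Complex.exp_add]
    ring_nf
  have hexp : cexp (Real.pi * I * (σ / 4 - v)) =
      cexp (2 * Real.pi * I * σ / 8) * cexp (-(Real.pi * I * v)) := by
    rw [← Complex.exp_add]
    ring_nf
  rw [← Theta_exp_eq_jacobiTheta₂ hσ v, Theta_eq_one_sub_mul_tprod
    (norm_exp_two_pi_mul_I_mul_lt_one hσ) (exp_ne_zero _), th1, hcos, hexp,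
    mul_right_comm _ _ (Complex.sin _), mul_right_comm _ _ (Complex.sin _), hsin]
  ring

lemma th1_neg (v σ : ℂ) : th1 (-v) σ = -th1 v σ := by
  simp [th1, Complex.sin_neg, Complex.cos_neg]

lemma th3_eq_jacobiTheta₂ {σ : ℂ} (hσ : 0 < σ.im) (v : ℂ) : th3 v σ = jacobiTheta₂ v σ := by
  have hphase : cexp (Real.pi * I * (v + σ / 4)) *
      (I * cexp (Real.pi * I * (σ / 4 - (v + (σ + 1) / 2)))) = 1 := by
    rw [mul_left_comm, ← Complex.exp_add]
    nth_rw 1 [← exp_pi_div_two_mul_I]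
    rw [← Complex.exp_add, exp_eq_one_iff]
    exact ⟨0, by push_cast; ring⟩
  rw [th3, th1_eq_jacobiTheta₂ hσ, ← mul_assoc, hphase, one_mul,
    show v + (σ + 1) / 2 + 1 / 2 - σ / 2 = v + 1 by ring, jacobiTheta₂_add_left]

lemma th0_eq_jacobiTheta₂ {σ : ℂ} (hσ : 0 < σ.im) (v : ℂ) :
    th0 v σ = jacobiTheta₂ (v + 1 / 2) σ := by
  have hphase : -I * cexp (Real.pi * I * (v + σ / 4)) *
      (I * cexp (Real.pi * I * (σ / 4 - (v + σ / 2)))) = 1 := by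
    rw [mul_mul_mul_comm, ← Complex.exp_add, neg_mul, I_mul_I, neg_neg, one_mul,
      ← Complex.exp_zero]
    ring_nf
  rw [th0, th1_eq_jacobiTheta₂ hσ, ← mul_assoc, hphase, one_mul]
  ring_nf

lemma th3_neg {σ : ℂ} (hσ : 0 < σ.im) (v : ℂ) : th3 (-v) σ = th3 v σ := by
  rw [th3_eq_jacobiTheta₂ hσ, th3_eq_jacobiTheta₂ hσ, jacobiTheta₂_neg_left]

lemma th0_neg {σ : ℂ} (hσ : 0 < σ.im) (v : ℂ) : th0 (-v) σ = th0 v σ := by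
  rw [th0_eq_jacobiTheta₂ hσ, th0_eq_jacobiTheta₂ hσ, ← jacobiTheta₂_neg_left,
    ← jacobiTheta₂_add_left]
  ring_nf

/-- The `n`-th term of the Fourier series of `ϑ₁(v|τ)`. -/
def th1Term (v τ : ℂ) (n : ℤ) : ℂ :=
  I * cexp (Real.pi * I * (n + (n - 1 / 2) ^ 2 * τ + (2 * n - 1) * v))

lemma hasSum_th1Term {τ : ℂ} (hτ : 0 < τ.im) (v : ℂ) : HasSum (th1Term v τ) (th1 v τ) := by
  rw [th1_eq_jacobiTheta₂ hτ]
  refine ((hasSum_jacobiTheta₂_term (v + 1 / 2 - τ / 2) hτ).mul_left _).congr_fun fun n => ?_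
  rw [th1Term, jacobiTheta₂_term, mul_assoc I, ← Complex.exp_add]
  ring_nf

lemma tsum_int_prod_eq_tsum_odd_sublattice {F : ℤ × ℤ → ℂ} (hF : ∀ m l, F (m + 2 * l, m) = 0) :
    ∑' x, F x = ∑' x : ℤ × ℤ, F (x.1 + x.2 - 1, x.1 - x.2) := by
  let φ : ℤ × ℤ → ℤ × ℤ := fun x => (x.1 + x.2 - 1, x.1 - x.2)
  have hinj : Function.Injective φ := by
    rintro ⟨a, b⟩ ⟨a', b'⟩ h
    simp only [φ, Prod.mk.injEq] at h ⊢
    omega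
  have hsupp : Function.support F ⊆ Set.range φ := by
    rintro ⟨n, m⟩ h
    rcases Int.even_or_odd' (n - m) with ⟨l, hl | hl⟩
    · obtain rfl : n = m + 2 * l := by omega
      exact absurd (hF m l) h
    · exact ⟨(m + l + 1, l + 1), by simp only [φ, Prod.mk.injEq]; omega⟩
  exact (hinj.tsum_eq hsupp).symm

lemma jacobiTheta₂_term_add_half (n : ℤ) (v σ : ℂ) :
    jacobiTheta₂_term n (v + 1 / 2) σ = (-1) ^ n * jacobiTheta₂_term n v σ := by
  rw [jacobiTheta₂_term, jacobiTheta₂_term, ← exp_pi_mul_I, ← Complex.exp_int_mul,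
    ← Complex.exp_add]
  ring_nf

lemma im_div_two_pos {τ : ℂ} (hτ : 0 < τ.im) : 0 < (τ / 2).im := by
  simpa using hτ

lemma jacobiTheta₂_term_mul_sub_of_even (x y σ : ℂ) (m l : ℤ) :
    jacobiTheta₂_term (m + 2 * l) (x + 1 / 2) σ * jacobiTheta₂_term m y σ -
      jacobiTheta₂_term (m + 2 * l) x σ * jacobiTheta₂_term m (y + 1 / 2) σ = 0 := by
  have hsign : (-1 : ℂ) ^ (m + 2 * l) = (-1) ^ m := by
    rw [zpow_add₀ (by norm_num), zpow_mul, zpow_ofNat, neg_one_sq, one_zpow, mul_one]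
  rw [jacobiTheta₂_term_add_half, jacobiTheta₂_term_add_half, hsign]
  ring

lemma jacobiTheta₂_term_mul_sub_of_odd (x y τ : ℂ) (a b : ℤ) :
    jacobiTheta₂_term (a + b - 1) (x + 1 / 2) (τ / 2) * jacobiTheta₂_term (a - b) y (τ / 2) -
      jacobiTheta₂_term (a + b - 1) x (τ / 2) * jacobiTheta₂_term (a - b) (y + 1 / 2) (τ / 2) =
    2 * (th1Term (x + y) τ a * th1Term (x - y) τ b) := by
  have hodd : (-1 : ℂ) ^ (a + b - 1) = -(-1) ^ (a + b) := by
    rw [zpow_sub_one₀ (by norm_num), inv_neg_one, mul_neg_one]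
  have heven : (-1 : ℂ) ^ (a - b) = (-1) ^ (a + b) := by
    rw [show a - b = a + b + 2 * -b by ring, zpow_add₀ (by norm_num), zpow_mul, zpow_ofNat,
      neg_one_sq, one_zpow, mul_one]
  have hprod : (-1) ^ (a + b) * (jacobiTheta₂_term (a + b - 1) x (τ / 2) *
      jacobiTheta₂_term (a - b) y (τ / 2)) = -(th1Term (x + y) τ a * th1Term (x - y) τ b) := by
    simp only [th1Term, jacobiTheta₂_term]
    rw [mul_mul_mul_comm I, I_mul_I, neg_one_mul, neg_neg, ← exp_pi_mul_I,
      ← Complex.exp_int_mul, ← Complex.exp_add, ← Complex.exp_add, ← Complex.exp_add]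
    congr 1
    push_cast
    ring
  rw [jacobiTheta₂_term_add_half, jacobiTheta₂_term_add_half, hodd, heven]
  linear_combination -2 * hprod

theorem th0_mul_th3_sub {τ : ℂ} (hτ : 0 < τ.im) (x y : ℂ) :
    th0 x (τ / 2) * th3 y (τ / 2) - th3 x (τ / 2) * th0 y (τ / 2) =
      2 * (th1 (x + y) τ * th1 (x - y) τ) := by
  have hσ : 0 < (τ / 2).im := im_div_two_pos hτ
  have hs (z : ℂ) : Summable fun n => ‖jacobiTheta₂_term n z (τ / 2)‖ :=
    ((summable_jacobiTheta₂_term_iff z _).mpr hσ).norm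
  have hs1 (z : ℂ) : Summable fun n => ‖th1Term z τ n‖ := (hasSum_th1Term hτ z).summable.norm
  simp only [th0_eq_jacobiTheta₂ hσ, th3_eq_jacobiTheta₂ hσ, jacobiTheta₂,
    ← (hasSum_th1Term hτ _).tsum_eq]
  rw [tsum_mul_tsum_of_summable_norm (hs _) (hs _), tsum_mul_tsum_of_summable_norm (hs _) (hs _),
    tsum_mul_tsum_of_summable_norm (hs1 _) (hs1 _), ← tsum_mul_left,
    ← (summable_mul_of_summable_norm (hs _) (hs _)).tsum_sub
      (summable_mul_of_summable_norm (hs _) (hs _)),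
    tsum_int_prod_eq_tsum_odd_sublattice (jacobiTheta₂_term_mul_sub_of_even x y (τ / 2))]
  exact tsum_congr fun _ => jacobiTheta₂_term_mul_sub_of_odd x y τ _ _

end JacobiTheta

section Bracket

variable {τ : ℂ} {r : ℝ}

lemma cpow_half_neg_I_mul (hτ : 0 < τ.im) :
    (-I * τ) ^ (1 / 2 : ℂ) = cexp (-(Real.pi : ℂ) * I / 4) * τ ^ (1 / 2 : ℂ) := by
  have hτ0 : τ ≠ 0 := by rintro rfl; simp at hτ
  have harg : (-I).arg + τ.arg ∈ Set.Ioc (-Real.pi) Real.pi := by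
    have := arg_nonneg_iff.mpr hτ.le
    have := arg_le_pi τ
    rw [arg_neg_I]
    constructor <;> linarith [Real.pi_pos]
  rw [cpow_def_of_ne_zero hτ0, cpow_def_of_ne_zero (mul_ne_zero (neg_ne_zero.mpr I_ne_zero) hτ0),
    Complex.log_mul (neg_ne_zero.mpr I_ne_zero) hτ0 harg, log_neg_I, ← Complex.exp_add]
  ring_nf

lemma jacobiTheta₂_add_half_sub_half_modulus (hτ : τ ≠ 0) (v : ℂ) :
    jacobiTheta₂ (v + 1 / 2 - τ / 2) τ = 1 / (-I * τ) ^ (1 / 2 : ℂ) *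
      cexp (-Real.pi * I * (-v + 1 / 2 + τ / 2) ^ 2 / τ) *
        jacobiTheta₂ (-v / τ + 1 / 2 - -1 / τ / 2) (-1 / τ) := by
  rw [← jacobiTheta₂_neg_left, ← jacobiTheta₂_add_left,
    show -(v + 1 / 2 - τ / 2) + 1 = -v + 1 / 2 + τ / 2 by ring,
    jacobiTheta₂_functional_equation]
  congr 2
  field_simp
  ring

/-- The modular transformation `σ ↦ -1/σ` turns the product in `exp(-2πi/τ)` defining the bracket
into a theta function with modulus `τ`. -/
theorem br_eq_Cc_mul_th1 (hτ : 0 < τ.im) (hr : r ≠ 0) (u : ℂ) :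
    br τ r u = Cc τ r * th1 (u / r) τ := by
  have hτ0 : τ ≠ 0 := by rintro rfl; simp at hτ
  have hr0 : (r : ℂ) ≠ 0 := ofReal_ne_zero.mpr hr
  have him : 0 < (-1 / τ).im := by
    rw [neg_div, neg_im, one_div, inv_im, neg_div, neg_neg]
    exact div_pos hτ (normSq_pos.mpr hτ0)
  have hnome : xp τ r (2 * r) = cexp (2 * Real.pi * I * (-1 / τ)) := by
    rw [xp]; congr 1; field_simp
  have harg : xp τ r (2 * u) = cexp (2 * Real.pi * I * (-(u / r) / τ)) := by
    rw [xp]; congr 1; field_simp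
  have hphase : cexp (-I * Real.pi * (u ^ 2 / r - u) / (r * τ)) =
      cexp (-I * Real.pi * (-r / 4) / (r * τ)) * (I * (cexp (Real.pi * I * (τ / 4 - u / r)) *
        cexp (-Real.pi * I * (-(u / r) + 1 / 2 + τ / 2) ^ 2 / τ))) := by
    nth_rw 3 [← exp_pi_div_two_mul_I]
    simp only [← Complex.exp_add]
    congr 1
    field_simp
    ring
  rw [br, hnome, harg, Theta_exp_eq_jacobiTheta₂ him, th1_eq_jacobiTheta₂ hτ,
    jacobiTheta₂_add_half_sub_half_modulus hτ0, Cc, mul_assoc (xp _ _ _) (cexp _),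
    ← cpow_half_neg_I_mul hτ, xp, xp, hphase]
  field_simp

lemma br_neg (hτ : 0 < τ.im) (hr : r ≠ 0) (u : ℂ) : br τ r (-u) = -br τ r u := by
  rw [br_eq_Cc_mul_th1 hτ hr, br_eq_Cc_mul_th1 hτ hr, neg_div, th1_neg, mul_neg]

lemma br_zero (hτ : 0 < τ.im) (hr : r ≠ 0) : br τ r 0 = 0 := by
  simpa only [neg_zero, self_eq_neg] using br_neg hτ hr 0

end Bracket

section Wedge

/-- The determinant form on `ℂ²`. -/
def wedge (v w : ℂ × ℂ) : ℂ := v.1 * w.2 - v.2 * w.1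

lemma wedge_mul_wedge_sub (a b v w : ℂ × ℂ) :
    wedge v a * wedge w b - wedge w a * wedge v b = wedge v w * wedge a b := by
  simp only [wedge]
  ring

lemma wedge_smul_eq_sub (x g e : ℂ × ℂ) : wedge g e • x = wedge x e • g - wedge x g • e := by
  ext <;> simp only [wedge, Prod.smul_fst, Prod.smul_snd, Prod.fst_sub, Prod.snd_sub, smul_eq_mul]
    <;> ring

/-- The vector `(ϑ₀(x/r|τ/2), ϑ₃(x/r|τ/2))`: the intertwining vectors `ψ_{±1}(u)^a_b` are its two
components at `x = ((a - b)u + a)/2`. -/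
def thetaVec (τ : ℂ) (r : ℝ) (x : ℂ) : ℂ × ℂ := (th0 (x / r) (τ / 2), th3 (x / r) (τ / 2))

variable {τ : ℂ} {r : ℝ}

lemma thetaVec_neg (hτ : 0 < τ.im) (x : ℂ) : thetaVec τ r (-x) = thetaVec τ r x := by
  rw [thetaVec, thetaVec, neg_div, th0_neg (im_div_two_pos hτ), th3_neg (im_div_two_pos hτ)]

theorem Cc_sq_mul_wedge_thetaVec (hτ : 0 < τ.im) (hr : r ≠ 0) (x y : ℂ) :
    Cc τ r ^ 2 * wedge (thetaVec τ r x) (thetaVec τ r y) =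
      2 * (br τ r (x + y) * br τ r (x - y)) := by
  rw [wedge, thetaVec, thetaVec, th0_mul_th3_sub hτ, br_eq_Cc_mul_th1 hτ hr,
    br_eq_Cc_mul_th1 hτ hr, add_div, sub_div]
  ring

lemma br_add_mul_br_sub (hτ : 0 < τ.im) (hr : r ≠ 0) (x y : ℂ) :
    br τ r (x + y) * br τ r (x - y) = Cc τ r ^ 2 / 2 * wedge (thetaVec τ r x) (thetaVec τ r y) := by
  linear_combination (-1 / 2 : ℂ) * Cc_sq_mul_wedge_thetaVec hτ hr x y

/-- The Weierstrass three-term identity is the Plücker relation between four theta vectors. -/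
theorem br_weierstrass (hτ : 0 < τ.im) (hr : r ≠ 0) (x y z w : ℂ) :
    br τ r (x + z) * br τ r (x - z) * (br τ r (y + w) * br τ r (y - w)) -
      br τ r (y + z) * br τ r (y - z) * (br τ r (x + w) * br τ r (x - w)) =
    br τ r (x + y) * br τ r (x - y) * (br τ r (z + w) * br τ r (z - w)) := by
  simp only [br_add_mul_br_sub hτ hr]
  linear_combination (Cc τ r ^ 2 / 2) ^ 2 * wedge_mul_wedge_sub (thetaVec τ r z) (thetaVec τ r w)
    (thetaVec τ r x) (thetaVec τ r y)

lemma thetaVec_eq_smul_sub_smul (hτ : 0 < τ.im) (hr : r ≠ 0) (x : ℂ) {g e : ℂ}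
    (hsub : br τ r (g - e) ≠ 0) (hadd : br τ r (g + e) ≠ 0) :
    thetaVec τ r x =
      (br τ r (x - e) * br τ r (x + e) / (br τ r (g - e) * br τ r (g + e))) • thetaVec τ r g -
      (br τ r (x - g) * br τ r (x + g) / (br τ r (g - e) * br τ r (g + e))) • thetaVec τ r e := by
  have hne : br τ r (g + e) * br τ r (g - e) ≠ 0 := mul_ne_zero hadd hsub
  have hcramer := congrArg (fun v => (Cc τ r ^ 2 / 2) • v)
    (wedge_smul_eq_sub (thetaVec τ r x) (thetaVec τ r g) (thetaVec τ r e))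
  simp only [smul_sub, smul_smul, ← br_add_mul_br_sub hτ hr] at hcramer
  rw [← inv_smul_smul₀ hne (thetaVec τ r x), hcramer, smul_sub, smul_smul, smul_smul]
  congr 2 <;> field_simp

end Wedge

section PathSum

/-- The standard basis of `ℂ²`, with `true` and `false` standing for the signs `+1` and `-1`. -/
def stdVec (b : Bool) : ℂ × ℂ := if b then (1, 0) else (0, 1)

/-- The coordinate of a vector of `ℂ²` along `stdVec b`. -/
def coord (b : Bool) (v : ℂ × ℂ) : ℂ := if b then v.1 else v.2

/-- The pairing with a vector `v ∈ ℂ²` of the dual intertwining vector `ψ*(u)^{c+s}_c`. -/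
def stepWeight (τ : ℂ) (r : ℝ) (u : ℂ) (c s : ℤ) (v : ℂ × ℂ) : ℂ :=
  -s * Cc τ r ^ 2 * wedge v (thetaVec τ r ((s * u + c) / 2)) / (2 * br τ r c * br τ r u)

/-- The sum over all `±1`-step paths from `c` to `d` of the products of the step weights, where the
`j`-th step is paired with the `j`-th vector of the list and the spectral parameter decreases by
one at each step, reaching `u` at the last one. -/
def pathSum (τ : ℂ) (r : ℝ) (u : ℂ) (d : ℤ) : List (ℂ × ℂ) → ℤ → ℂ
  | [], c => if c = d then 1 else 0
  | v :: L, c => stepWeight τ r (u + L.length) c 1 v * pathSum τ r u d L (c + 1) +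
      stepWeight τ r (u + L.length) c (-1) v * pathSum τ r u d L (c - 1)

/-- The brackets `[s]` of all integers `s` at distance at most `N` from `c` are nonzero: no
denominator vanishes along a path of `N` steps starting at `c`. -/
def BrNeZeroNear (τ : ℂ) (r : ℝ) (c : ℤ) (N : ℕ) : Prop :=
  ∀ s : ℤ, |s - c| ≤ N → br τ r s ≠ 0

variable {τ : ℂ} {r : ℝ} {u : ℂ} {c d : ℤ}

lemma BrNeZeroNear.mono {N N' : ℕ} {c' : ℤ} (h : BrNeZeroNear τ r c N)
    (hle : (c' - c).natAbs + N' ≤ N) : BrNeZeroNear τ r c' N' :=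
  fun s hs => h s (by rw [abs_le] at hs ⊢; omega)

lemma BrNeZeroNear.br_ne_zero {N : ℕ} (h : BrNeZeroNear τ r c N) : br τ r c ≠ 0 :=
  h c (by simp)

lemma psi_sg_eq_coord (b : Bool) (a a' : ℤ) :
    psi τ r u (sg b) a a' = coord b (thetaVec τ r (((a - a') * u + a) / 2)) := by
  cases b <;> simp [psi, sg, coord, thetaVec, div_div, mul_comm]

lemma wedge_stdVec (b : Bool) (w : ℂ × ℂ) : wedge (stdVec b) w = sg b * coord (!b) w := by
  cases b <;> simp [wedge, stdVec, sg, coord]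

lemma coord_smul_stdVec_add (v : ℂ × ℂ) :
    coord true v • stdVec true + coord false v • stdVec false = v := by
  ext <;> simp [coord, stdVec]

lemma psiStar_sg_eq_stepWeight (b : Bool) (c s : ℤ) :
    psiStar τ r u (sg b) (c + s) c = stepWeight τ r u c s (stdVec b) := by
  have hneg : -sg b = sg !b := by cases b <;> rfl
  rw [psiStar, hneg, psi_sg_eq_coord, stepWeight, wedge_stdVec]
  push_cast
  ring_nf

lemma stepWeight_add (s : ℤ) (v w : ℂ × ℂ) :
    stepWeight τ r u c s (v + w) = stepWeight τ r u c s v + stepWeight τ r u c s w := by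
  simp only [stepWeight, wedge, Prod.fst_add, Prod.snd_add]
  ring

lemma stepWeight_smul (s : ℤ) (a : ℂ) (v : ℂ × ℂ) :
    stepWeight τ r u c s (a • v) = a * stepWeight τ r u c s v := by
  simp only [stepWeight, wedge, Prod.smul_fst, Prod.smul_snd, smul_eq_mul]
  ring

lemma pathSum_cons_add (v w : ℂ × ℂ) (L : List (ℂ × ℂ)) :
    pathSum τ r u d ((v + w) :: L) c = pathSum τ r u d (v :: L) c + pathSum τ r u d (w :: L) c := by
  simp only [pathSum, stepWeight_add]
  ring

lemma pathSum_cons_smul (a : ℂ) (v : ℂ × ℂ) (L : List (ℂ × ℂ)) :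
    pathSum τ r u d ((a • v) :: L) c = a * pathSum τ r u d (v :: L) c := by
  simp only [pathSum, stepWeight_smul]
  ring

lemma pathSum_eq_zero_of_length_lt (L : List (ℂ × ℂ)) (h : L.length < (c - d).natAbs) :
    pathSum τ r u d L c = 0 := by
  induction L generalizing c with
  | nil => exact if_neg (by rintro rfl; simp at h)
  | cons v L ih =>
    rw [List.length_cons] at h
    rw [pathSum, ih (by omega), ih (by omega), mul_zero, mul_zero, add_zero]

lemma stepWeight_mul_stepWeight_comm (s : ℤ) (v w : ℂ × ℂ) :
    stepWeight τ r (u + 1) c s v * stepWeight τ r u (c + s) s w =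
      stepWeight τ r (u + 1) c s w * stepWeight τ r u (c + s) s v := by
  have harg : (s * (u + 1) + c) / 2 = (s * u + (c + s : ℤ)) / 2 := by push_cast; ring
  simp only [stepWeight, harg]
  ring

lemma stepWeight_mul_stepWeight_sub (hτ : 0 < τ.im) (hr : r ≠ 0) {s : ℤ} (hs : s = 1 ∨ s = -1)
    (hc : br τ r (c + s : ℤ) ≠ 0) (v w : ℂ × ℂ) :
    stepWeight τ r (u + 1) c s v * stepWeight τ r u (c + s) (-s) w -
        stepWeight τ r (u + 1) c s w * stepWeight τ r u (c + s) (-s) v =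
      -s * (Cc τ r ^ 2 * wedge v w * br τ r u / (2 * br τ r c * br τ r (u + 1) * br τ r u)) := by
  have hodd : br τ r (s * u) = s * br τ r u := by
    rcases hs with rfl | rfl <;> simp [br_neg hτ hr]
  have hplucker := wedge_mul_wedge_sub (thetaVec τ r ((s * (u + 1) + c) / 2))
    (thetaVec τ r (((-s : ℤ) * u + (c + s : ℤ)) / 2)) v w
  have hcorner : Cc τ r ^ 2 * wedge (thetaVec τ r ((s * (u + 1) + c) / 2))
      (thetaVec τ r (((-s : ℤ) * u + (c + s : ℤ)) / 2)) =
        2 * (br τ r (c + s : ℤ) * (s * br τ r u)) := by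
    rw [Cc_sq_mul_wedge_thetaVec hτ hr, ← hodd]
    push_cast
    ring_nf
  have hs2 : (s : ℂ) ^ 2 = 1 := by rcases hs with rfl | rfl <;> norm_num
  have hcancel : br τ r (c + s : ℤ) * (br τ r (c + s : ℤ))⁻¹ = 1 := mul_inv_cancel₀ hc
  simp only [stepWeight, Int.cast_neg (R := ℂ) s] at hplucker hcorner ⊢
  set K := Cc τ r ^ 2 / (2 * br τ r c * br τ r (u + 1) * br τ r u)
  linear_combination
    -(s ^ 2 * Cc τ r ^ 2 * K / (2 * br τ r (c + s : ℤ))) * hplucker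
    - s ^ 2 * K * wedge v w / (2 * br τ r (c + s : ℤ)) * hcorner
    - s ^ 3 * K * wedge v w * br τ r u * hcancel
    - s * K * wedge v w * br τ r u * hs2

theorem pathSum_swap (hτ : 0 < τ.im) (hr : r ≠ 0) (v w : ℂ × ℂ) (L : List (ℂ × ℂ))
    (hup : br τ r (c + 1 : ℤ) ≠ 0) (hdown : br τ r (c + -1 : ℤ) ≠ 0) :
    pathSum τ r u d (v :: w :: L) c = pathSum τ r u d (w :: v :: L) c := by
  simp only [pathSum, List.length_cons, Nat.cast_add, Nat.cast_one, ← add_assoc]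
  generalize u + (L.length : ℂ) = u'
  have hup_up := stepWeight_mul_stepWeight_comm (τ := τ) (r := r) (u := u') (c := c) 1 v w
  have hdown_down := stepWeight_mul_stepWeight_comm (τ := τ) (r := r) (u := u') (c := c) (-1) v w
  have hup_down := stepWeight_mul_stepWeight_sub (u := u') hτ hr (.inl rfl) hup v w
  have hdown_up := stepWeight_mul_stepWeight_sub (u := u') hτ hr (.inr rfl) hdown v w
  simp only [neg_neg, ← sub_eq_add_neg, Int.cast_one, Int.cast_neg] at *
  rw [add_sub_cancel_right, sub_add_cancel]
  linear_combination hup_up * pathSum τ r u d L (c + 1 + 1) +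
    (hup_down + hdown_up) * pathSum τ r u d L c + hdown_down * pathSum τ r u d L (c - 1 - 1)

theorem pathSum_perm (hτ : 0 < τ.im) (hr : r ≠ 0) {L L' : List (ℂ × ℂ)} (hL : L.Perm L')
    (hc : BrNeZeroNear τ r c L.length) : pathSum τ r u d L c = pathSum τ r u d L' c := by
  induction hL generalizing c with
  | nil => rfl
  | cons v h ih =>
    rw [List.length_cons] at hc
    rw [pathSum, pathSum, ih (hc.mono (by omega)), ih (hc.mono (by omega)), h.length_eq]
  | swap v w L =>
    simp only [List.length_cons] at hc
    exact pathSum_swap hτ hr _ _ _ (hc _ (by rw [abs_le]; omega)) (hc _ (by rw [abs_le]; omega))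
  | trans h _ ih ih' => rw [ih hc, ih' (by rwa [← h.length_eq])]

lemma stepWeight_thetaVec (hτ : 0 < τ.im) (hr : r ≠ 0) (s : ℤ) (x : ℂ) :
    stepWeight τ r u c s (thetaVec τ r x) =
      -s * (br τ r (x + (s * u + c) / 2) * br τ r (x - (s * u + c) / 2)) /
        (br τ r c * br τ r u) := by
  rw [stepWeight, mul_assoc, Cc_sq_mul_wedge_thetaVec hτ hr, mul_left_comm, mul_assoc 2,
    mul_div_mul_left _ _ two_ne_zero]

lemma pathSum_thetaVec_cons_up (hτ : 0 < τ.im) (hr : r ≠ 0) (L : List (ℂ × ℂ)) {x : ℂ}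
    (hx : x = (c - u - L.length) / 2) (hc : br τ r c ≠ 0) (hu : br τ r (u + L.length) ≠ 0) :
    pathSum τ r u d (thetaVec τ r x :: L) c = pathSum τ r u d L (c + 1) := by
  have hup : stepWeight τ r (u + L.length) c 1 (thetaVec τ r x) = 1 := by
    rw [stepWeight_thetaVec hτ hr, Int.cast_one,
      show x + (1 * (u + L.length) + c) / 2 = c by rw [hx]; ring,
      show x - (1 * (u + L.length) + c) / 2 = -(u + L.length) by rw [hx]; ring, br_neg hτ hr]
    field_simp
  have hdown : stepWeight τ r (u + L.length) c (-1) (thetaVec τ r x) = 0 := by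
    rw [stepWeight_thetaVec hτ hr, Int.cast_neg, Int.cast_one,
      show x - (-1 * (u + L.length) + c) / 2 = 0 by rw [hx]; ring, br_zero hτ hr]
    ring
  rw [pathSum, hup, hdown, one_mul, zero_mul, add_zero]

lemma pathSum_thetaVec_cons_down (hτ : 0 < τ.im) (hr : r ≠ 0) (L : List (ℂ × ℂ)) {x : ℂ}
    (hx : x = (-c - u - L.length) / 2) (hc : br τ r c ≠ 0) (hu : br τ r (u + L.length) ≠ 0) :
    pathSum τ r u d (thetaVec τ r x :: L) c = pathSum τ r u d L (c - 1) := by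
  have hup : stepWeight τ r (u + L.length) c 1 (thetaVec τ r x) = 0 := by
    rw [stepWeight_thetaVec hτ hr, Int.cast_one,
      show x + (1 * (u + L.length) + c) / 2 = 0 by rw [hx]; ring, br_zero hτ hr]
    ring
  have hdown : stepWeight τ r (u + L.length) c (-1) (thetaVec τ r x) = 1 := by
    rw [stepWeight_thetaVec hτ hr, Int.cast_neg, Int.cast_one,
      show x + (-1 * (u + L.length) + c) / 2 = -(u + L.length) by rw [hx]; ring,
      show x - (-1 * (u + L.length) + c) / 2 = -c by rw [hx]; ring, br_neg hτ hr, br_neg hτ hr]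
    field_simp
  rw [pathSum, hup, hdown, one_mul, zero_mul, zero_add]

lemma pathSum_thetaVec_cons_expand (hτ : 0 < τ.im) (hr : r ≠ 0) (L : List (ℂ × ℂ)) (x : ℂ)
    {g e : ℂ} (hsub : br τ r (g - e) ≠ 0) (hadd : br τ r (g + e) ≠ 0) :
    pathSum τ r u d (thetaVec τ r x :: L) c =
      br τ r (x - e) * br τ r (x + e) / (br τ r (g - e) * br τ r (g + e)) *
        pathSum τ r u d (thetaVec τ r g :: L) c -
      br τ r (x - g) * br τ r (x + g) / (br τ r (g - e) * br τ r (g + e)) *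
        pathSum τ r u d (thetaVec τ r e :: L) c := by
  rw [thetaVec_eq_smul_sub_smul hτ hr x hsub hadd, sub_eq_add_neg, ← neg_smul, pathSum_cons_add,
    pathSum_cons_smul, pathSum_cons_smul, neg_mul, ← sub_eq_add_neg]

/-- The list of theta vectors at the `n` points `x, x + 1, …, x + n - 1`. -/
def thetaBlock (τ : ℂ) (r : ℝ) (n : ℕ) (x : ℂ) : List (ℂ × ℂ) :=
  (List.range n).map fun i : ℕ => thetaVec τ r (x + (i : ℂ))

@[simp] lemma length_thetaBlock (n : ℕ) (x : ℂ) : (thetaBlock τ r n x).length = n := by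
  simp [thetaBlock]

lemma thetaBlock_add (p q : ℕ) (x : ℂ) :
    thetaBlock τ r (p + q) x = thetaBlock τ r p x ++ thetaBlock τ r q (x + p) := by
  simp [thetaBlock, List.range_add, Function.comp_def, add_assoc]

lemma thetaBlock_succ (n : ℕ) (x : ℂ) :
    thetaBlock τ r (n + 1) x = thetaVec τ r x :: thetaBlock τ r n (x + 1) := by
  rw [add_comm, thetaBlock_add]
  simp [thetaBlock]

end PathSum

section EllipticBinomial

variable {τ : ℂ} {r : ℝ} {g e : ℂ}

lemma brF_zero (x : ℂ) : brF τ r x 0 = 1 := prod_range_zero _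

lemma brF_succ_of_eq {x y : ℂ} {n : ℕ} (h : x + n = y) :
    brF τ r x (n + 1) = brF τ r x n * br τ r y := by
  rw [brF, prod_range_succ, h, brF]

lemma brF_succ_of_eq' {x y : ℂ} {n : ℕ} (h : x + 1 = y) :
    brF τ r x (n + 1) = br τ r x * brF τ r y n := by
  subst h
  simp [brF, prod_range_succ', mul_comm, add_assoc, add_comm (1 : ℂ)]

lemma Cnk_add (p q : ℕ) (α g e : ℂ) :
    Cnk τ r (p + q) p α g e =
      brF τ r 1 (p + q) / (brF τ r 1 p * brF τ r 1 q) *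
        (brF τ r (α - e) p * brF τ r (α + e + q) p * brF τ r (α - g) q * brF τ r (α + g + p) q) /
        (brF τ r (g - e - q) p * brF τ r (e - g - p) q * brF τ r (g + e) (p + q)) := by
  rw [Cnk, Nat.add_sub_cancel_left]
  push_cast
  ring_nf

lemma Cnk_add_comm (p q : ℕ) (α g e : ℂ) :
    Cnk τ r (p + q) p α g e = Cnk τ r (q + p) q α e g := by
  rw [Cnk_add, Cnk_add, add_comm q p, add_comm e g]
  ring

lemma cdenomNZ_add {p q : ℕ} :
    CdenomNZ τ r (p + q) p g e ↔ brF τ r 1 p ≠ 0 ∧ brF τ r 1 q ≠ 0 ∧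
      brF τ r (g - e - q) p ≠ 0 ∧ brF τ r (e - g - p) q ≠ 0 ∧ brF τ r (g + e) (p + q) ≠ 0 := by
  rw [CdenomNZ, Nat.add_sub_cancel_left]
  push_cast
  ring_nf

lemma CdenomNZ.symm {p q : ℕ} (h : CdenomNZ τ r (p + q) p g e) :
    CdenomNZ τ r (q + p) q e g := by
  rw [cdenomNZ_add] at h ⊢
  rw [add_comm q p, add_comm e g]
  tauto

lemma CdenomNZ.of_succ_left {p q : ℕ} (h : CdenomNZ τ r (p + 1 + q) (p + 1) g e) :
    CdenomNZ τ r (p + q) p (g + 1) e := by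
  rw [cdenomNZ_add] at h ⊢
  obtain ⟨hp, hq, hsub, hsub', hadd⟩ := h
  rw [brF_succ_of_eq rfl] at hp
  rw [brF_succ_of_eq' rfl] at hsub
  rw [add_right_comm, brF_succ_of_eq' rfl] at hadd
  refine ⟨left_ne_zero_of_mul hp, hq, ?_, ?_, ?_⟩
  · convert right_ne_zero_of_mul hsub using 2; ring
  · convert hsub' using 2; push_cast; ring
  · convert right_ne_zero_of_mul hadd using 2; ring

lemma CdenomNZ.of_succ_right {p q : ℕ} (h : CdenomNZ τ r (p + (q + 1)) p g e) :
    CdenomNZ τ r (p + q) p g (e + 1) :=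
  h.symm.of_succ_left.symm

lemma CdenomNZ.br_add_ne_zero {k n : ℕ} (h : CdenomNZ τ r (k + 1) n g e) : br τ r (g + e) ≠ 0 := by
  have hadd := h.2.2.2.2
  rw [brF_succ_of_eq' rfl] at hadd
  exact left_ne_zero_of_mul hadd

lemma CdenomNZ.br_sub_ne_zero (hτ : 0 < τ.im) (hr : r ≠ 0) {n : ℕ}
    (h : CdenomNZ τ r (n + 1) 0 g e) : br τ r (g - e) ≠ 0 := by
  have hsub := h.2.2.2.1
  rw [Nat.sub_zero, Nat.cast_zero, sub_zero, brF_succ_of_eq' rfl] at hsub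
  rw [← neg_sub, br_neg hτ hr]
  exact neg_ne_zero.mpr (left_ne_zero_of_mul hsub)

lemma Cnk_succ_self (n : ℕ) (α : ℂ) (h : brF τ r 1 (n + 1) ≠ 0) :
    Cnk τ r (n + 1) (n + 1) α g e =
      br τ r (α - e) * br τ r (α + e) / (br τ r (g - e) * br τ r (g + e)) *
        Cnk τ r n n (α + 1) (g + 1) e := by
  have hn : brF τ r 1 n ≠ 0 := left_ne_zero_of_mul (brF_succ_of_eq rfl ▸ h)
  have hself := Cnk_add (τ := τ) (r := r) n 0 (α + 1) (g + 1) e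
  have hsucc := Cnk_add (τ := τ) (r := r) (n + 1) 0 α g e
  simp only [brF_zero, add_zero, Nat.cast_zero, sub_zero, mul_one] at hself hsucc
  rw [hself, hsucc, div_self h, div_self hn, brF_succ_of_eq' (sub_add_eq_add_sub α e 1),
    brF_succ_of_eq' (add_right_comm α e 1), brF_succ_of_eq' (sub_add_eq_add_sub g e 1),
    brF_succ_of_eq' (add_right_comm g e 1)]
  ring

lemma Cnk_succ_zero (hτ : 0 < τ.im) (hr : r ≠ 0) (n : ℕ) (α : ℂ) (h : brF τ r 1 (n + 1) ≠ 0) :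
    Cnk τ r (n + 1) 0 α g e =
      -(br τ r (α - g) * br τ r (α + g) / (br τ r (g - e) * br τ r (g + e)) *
        Cnk τ r n 0 (α + 1) g (e + 1)) := by
  have hself := Cnk_add_comm (τ := τ) (r := r) 0 n (α + 1) g (e + 1)
  have hsucc := Cnk_add_comm (τ := τ) (r := r) 0 (n + 1) α g e
  simp only [zero_add, add_zero] at hself hsucc
  rw [hsucc, hself, Cnk_succ_self n α h, ← neg_sub g e, br_neg hτ hr, add_comm e g]
  ring

/-- The common factor of the three binomial coefficients in the Pascal recursion
`Cnk_succ_add_succ`. -/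
def pascalCore (τ : ℂ) (r : ℝ) (p q : ℕ) (α g e : ℂ) : ℂ :=
  brF τ r 1 (p + q + 1) * (brF τ r (α - e) (p + 1) * brF τ r (α - g) (q + 1) *
      brF τ r (α + e + q + 2) p * brF τ r (α + g + p + 2) q) /
    (brF τ r 1 p * brF τ r 1 q * brF τ r (g - e - q) p * brF τ r (e - g - p) q *
      brF τ r (g + e + 1) (p + q + 1))

lemma pascalCore_comm (p q : ℕ) (α g e : ℂ) :
    pascalCore τ r p q α g e = pascalCore τ r q p α e g := by
  rw [pascalCore, pascalCore, add_comm q p, add_comm e g]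
  ring

lemma br_mul_Cnk_eq_pascalCore (p q : ℕ) (α g e : ℂ) :
    br τ r (α - e) * Cnk τ r (p + (q + 1)) p (α + 1) (g + 1) e =
      pascalCore τ r p q α g e * br τ r (α + g + p + q + 2) /
        (br τ r (q + 1) * br τ r (e - g - p - 1)) := by
  rw [Cnk_add, pascalCore, brF_succ_of_eq' (sub_add_eq_add_sub α e 1),
    brF_succ_of_eq (add_comm (1 : ℂ) q)]
  push_cast
  rw [show α + 1 + e + (q + 1) = α + e + q + 2 by ring, show α + 1 - (g + 1) = α - g by ring,
    show α + 1 + (g + 1) + p = α + g + p + 2 by ring, show g + 1 - e - (q + 1) = g - e - q by ring,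
    show e - (g + 1) - p = e - g - p - 1 by ring, show g + 1 + e = g + e + 1 by ring, ← add_assoc,
    brF_succ_of_eq (show α + g + p + 2 + q = α + g + p + q + 2 by ring),
    brF_succ_of_eq' (sub_add_cancel (e - g - p) 1)]
  ring

lemma Cnk_succ_add_succ_eq_pascalCore (p q : ℕ) (α g e : ℂ) :
    Cnk τ r (p + 1 + (q + 1)) (p + 1) α g e =
      pascalCore τ r p q α g e *
        (br τ r (p + q + 2) * br τ r (α + e + q + 1) * br τ r (α + g + p + 1)) /
        (br τ r (p + 1) * br τ r (q + 1) * br τ r (g - e - q - 1) * br τ r (e - g - p - 1) *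
          br τ r (g + e)) := by
  rw [Cnk_add, pascalCore, show p + 1 + (q + 1) = p + q + 1 + 1 by ring,
    brF_succ_of_eq (add_comm (1 : ℂ) p), brF_succ_of_eq (add_comm (1 : ℂ) q),
    brF_succ_of_eq (show 1 + ((p + q + 1 : ℕ) : ℂ) = p + q + 2 by push_cast; ring),
    brF_succ_of_eq' (x := g + e) rfl]
  push_cast
  simp only [← add_assoc, ← sub_sub]
  rw [brF_succ_of_eq' (show α + e + q + 1 + 1 = α + e + q + 2 by ring),
    brF_succ_of_eq' (show α + g + p + 1 + 1 = α + g + p + 2 by ring),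
    brF_succ_of_eq' (sub_add_cancel (g - e - q) 1), brF_succ_of_eq' (sub_add_cancel (e - g - p) 1)]
  ring

lemma br_pascal (hτ : 0 < τ.im) (hr : r ≠ 0) (α g e x y : ℂ) :
    br τ r (x + y) * br τ r (g - e) * (br τ r (α + e + y) * br τ r (α + g + x)) =
      br τ r x * br τ r (g - e - y) * (br τ r (α + e) * br τ r (α + g + x + y)) -
      br τ r y * br τ r (e - g - x) * (br τ r (α + e + x + y) * br τ r (α + g)) := by
  have h : br τ r (α + g + x + y) * br τ r (α + e) * (br τ r x * br τ r (g - e - y)) -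
      br τ r (-(e - g - x)) * br τ r (-y) * (br τ r (α + e + x + y) * br τ r (α + g)) =
      br τ r (α + g + x) * br τ r (α + e + y) * (br τ r (x + y) * br τ r (g - e)) := by
    convert br_weierstrass hτ hr ((2 * α + g + e + x + y) / 2) ((g - e + x - y) / 2)
      ((x + y + g - e) / 2) ((x + y - g + e) / 2) using 4 <;> ring_nf
  rw [br_neg hτ hr, br_neg hτ hr] at h
  linear_combination -h

theorem Cnk_succ_add_succ (hτ : 0 < τ.im) (hr : r ≠ 0) {p q : ℕ} (α : ℂ)
    (h : CdenomNZ τ r (p + 1 + (q + 1)) (p + 1) g e) (hsub : br τ r (g - e) ≠ 0) :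
    Cnk τ r (p + 1 + (q + 1)) (p + 1) α g e =
      br τ r (α - e) * br τ r (α + e) / (br τ r (g - e) * br τ r (g + e)) *
        Cnk τ r (p + (q + 1)) p (α + 1) (g + 1) e -
      br τ r (α - g) * br τ r (α + g) / (br τ r (g - e) * br τ r (g + e)) *
        Cnk τ r (p + 1 + q) (p + 1) (α + 1) g (e + 1) := by
  have hleft := br_mul_Cnk_eq_pascalCore (τ := τ) (r := r) p q α g e
  have hright := br_mul_Cnk_eq_pascalCore (τ := τ) (r := r) q p α e g
  rw [← Cnk_add_comm, ← pascalCore_comm] at hright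
  have hweier := br_pascal hτ hr α g e (p + 1) (q + 1)
  have hadd : br τ r (g + e) ≠ 0 := h.br_add_ne_zero
  obtain ⟨hp, hq, hgq, hep, -⟩ := cdenomNZ_add.mp h
  rw [brF_succ_of_eq (add_comm (1 : ℂ) _)] at hp hq
  rw [brF_succ_of_eq' rfl] at hgq hep
  push_cast at hgq hep
  rw [← sub_sub] at hgq hep
  replace hp := right_ne_zero_of_mul hp
  replace hq := right_ne_zero_of_mul hq
  replace hgq := left_ne_zero_of_mul hgq
  replace hep := left_ne_zero_of_mul hep
  simp only [← add_assoc, ← sub_sub] at hweier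
  rw [show (p + 1 + q + 1 : ℂ) = p + q + 2 by ring,
    show α + g + p + 1 + q + 1 = α + g + p + q + 2 by ring,
    show α + e + p + 1 + q + 1 = α + e + q + p + 2 by ring] at hweier
  rw [eq_div_iff (mul_ne_zero hq hep)] at hleft
  rw [eq_div_iff (mul_ne_zero hp hgq)] at hright
  rw [Cnk_succ_add_succ_eq_pascalCore]
  field_simp
  linear_combination pascalCore τ r p q α g e * hweier -
    br τ r (p + 1) * br τ r (g - e - q - 1) * br τ r (α + e) * hleft +
    br τ r (q + 1) * br τ r (e - g - p - 1) * br τ r (α + g) * hright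

end EllipticBinomial

section BinomialTheorem

lemma sum_antidiagonal_succ_eq_add {M : Type*} [AddCommMonoid M] {n : ℕ} {t a b : ℕ × ℕ → M}
    (hleft : t (0, n + 1) = b (0, n)) (hright : t (n + 1, 0) = a (n, 0))
    (hmid : ∀ p q, p + q + 1 = n → t (p + 1, q + 1) = a (p, q + 1) + b (p + 1, q)) :
    ∑ x ∈ antidiagonal (n + 1), t x = ∑ x ∈ antidiagonal n, a x + ∑ x ∈ antidiagonal n, b x := by
  cases n with
  | zero => simpa [Nat.antidiagonal_succ, hleft, hright] using add_comm _ _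
  | succ n =>
    rw [Nat.sum_antidiagonal_succ, Nat.sum_antidiagonal_succ' (f := fun x => t (x.1 + 1, x.2)),
      Nat.sum_antidiagonal_succ' (f := a), Nat.sum_antidiagonal_succ (f := b), hleft, hright,
      sum_congr rfl fun x hx => hmid x.1 x.2 (by rw [mem_antidiagonal.mp hx]), sum_add_distrib]
    abel

variable {τ : ℂ} {r : ℝ} {u : ℂ} {c d : ℤ} {γ e : ℂ}

lemma sum_antidiagonal_succ_Cnk_mul (hτ : 0 < τ.im) (hr : r ≠ 0) (n : ℕ) (α : ℂ) (X : ℕ → ℕ → ℂ)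
    (hsub : br τ r (γ - e) ≠ 0)
    (hden : ∀ p q : ℕ, p + q = n + 1 → X p q ≠ 0 → CdenomNZ τ r (p + q) p γ e) :
    ∑ x ∈ antidiagonal (n + 1), Cnk τ r (x.1 + x.2) x.1 α γ e * X x.1 x.2 =
      br τ r (α - e) * br τ r (α + e) / (br τ r (γ - e) * br τ r (γ + e)) *
        ∑ x ∈ antidiagonal n, Cnk τ r (x.1 + x.2) x.1 (α + 1) (γ + 1) e * X (x.1 + 1) x.2 -
      br τ r (α - γ) * br τ r (α + γ) / (br τ r (γ - e) * br τ r (γ + e)) *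
        ∑ x ∈ antidiagonal n, Cnk τ r (x.1 + x.2) x.1 (α + 1) γ (e + 1) * X x.1 (x.2 + 1) := by
  rw [sub_eq_add_neg, ← neg_mul, mul_sum, mul_sum]
  apply sum_antidiagonal_succ_eq_add
  · by_cases hX : X 0 (n + 1) = 0
    · simp only [hX, mul_zero]
    · have hone := (cdenomNZ_add.mp (hden 0 (n + 1) (zero_add _) hX)).2.1
      simp only [zero_add, Cnk_succ_zero hτ hr n α hone]
      ring
  · by_cases hX : X (n + 1) 0 = 0
    · simp only [hX, mul_zero]
    · have hone := (cdenomNZ_add.mp (hden (n + 1) 0 rfl hX)).1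
      simp only [add_zero, Cnk_succ_self n α hone]
      ring
  · intro p q hpq
    by_cases hX : X (p + 1) (q + 1) = 0
    · simp only [hX, mul_zero, add_zero]
    · rw [Cnk_succ_add_succ hτ hr α (hden (p + 1) (q + 1) (by omega) hX) hsub]
      ring

lemma pathSum_thetaBlock_append_eq_zero (n : ℕ) (x : ℂ) (Y : List (ℂ × ℂ))
    (h : d + (n + Y.length) < c) : pathSum τ r u d (thetaBlock τ r n x ++ Y) c = 0 :=
  pathSum_eq_zero_of_length_lt _ (by rw [List.length_append, length_thetaBlock]; omega)

lemma pathSum_thetaBlock_append_cons (hτ : 0 < τ.im) (hr : r ≠ 0) (n : ℕ) (x : ℂ) (v : ℂ × ℂ)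
    (Y : List (ℂ × ℂ)) (hc : BrNeZeroNear τ r c (n + 1 + Y.length)) :
    pathSum τ r u d (thetaBlock τ r n x ++ v :: Y) c =
      pathSum τ r u d (v :: (thetaBlock τ r n x ++ Y)) c :=
  pathSum_perm hτ hr List.perm_middle (hc.mono (by simp; omega))

lemma pathSum_thetaBlock_succ_append (hτ : 0 < τ.im) (hr : r ≠ 0) (n : ℕ) (Y : List (ℂ × ℂ))
    (α : ℂ) (hγ : γ = (c - u - (n + Y.length)) / 2) (hc : BrNeZeroNear τ r c (n + 1 + Y.length))
    (hu : br τ r (u + (n + Y.length : ℕ)) ≠ 0) (hsub : br τ r (γ - e) ≠ 0)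
    (hadd : br τ r (γ + e) ≠ 0) :
    pathSum τ r u d (thetaBlock τ r (n + 1) α ++ Y) c =
      br τ r (α - e) * br τ r (α + e) / (br τ r (γ - e) * br τ r (γ + e)) *
        pathSum τ r u d (thetaBlock τ r n (α + 1) ++ Y) (c + 1) -
      br τ r (α - γ) * br τ r (α + γ) / (br τ r (γ - e) * br τ r (γ + e)) *
        pathSum τ r u d (thetaBlock τ r n (α + 1) ++ thetaVec τ r e :: Y) c := by
  have hlen : (thetaBlock τ r n (α + 1) ++ Y).length = n + Y.length := by simp
  rw [thetaBlock_succ, List.cons_append, pathSum_thetaVec_cons_expand hτ hr _ α hsub hadd,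
    pathSum_thetaVec_cons_up hτ hr _ (by rw [hlen, hγ]; push_cast; ring) hc.br_ne_zero (hlen ▸ hu),
    pathSum_thetaBlock_append_cons hτ hr n _ _ _ hc]

/-- The elliptic binomial theorem: the theta vector at `γ` forces an up step from `c`, so expanding
along it and the one at `e` trades each vector of the block for an up step or a vector of the
block at `e`. -/
theorem pathSum_thetaBlock_append (hτ : 0 < τ.im) (hr : r ≠ 0) (n : ℕ) (Y : List (ℂ × ℂ)) (α : ℂ)
    (hγ : γ = (c - u - (n + Y.length) + 1) / 2) (hc : BrNeZeroNear τ r c (n + Y.length))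
    (hu : ∀ j : ℕ, j < n + Y.length → br τ r (u + j) ≠ 0)
    (hden : ∀ p q : ℕ, p + q = n → c + p ≤ d + (q + Y.length) → CdenomNZ τ r (p + q) p γ e) :
    pathSum τ r u d (thetaBlock τ r n α ++ Y) c =
      ∑ x ∈ antidiagonal n, Cnk τ r (x.1 + x.2) x.1 α γ e *
        pathSum τ r u d (thetaBlock τ r x.2 e ++ Y) (c + x.1) := by
  induction n generalizing Y c α γ e with
  | zero => simp [Cnk_add, brF_zero, thetaBlock]
  | succ n ih =>
    rcases lt_or_ge (d + ((n + 1 : ℕ) + Y.length : ℤ)) c with hlt | hreach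
    · rw [pathSum_thetaBlock_append_eq_zero _ _ _ hlt, sum_eq_zero fun x hx => ?_]
      have := mem_antidiagonal.mp hx
      rw [pathSum_thetaBlock_append_eq_zero _ _ _ (by omega), mul_zero]
    have hfirst : CdenomNZ τ r (n + 1) 0 γ e := by
      simpa using hden 0 (n + 1) (zero_add _) (by simpa using hreach)
    have hsub : br τ r (γ - e) ≠ 0 := hfirst.br_sub_ne_zero hτ hr
    have hup := ih (c := c + 1) (γ := γ + 1) (e := e) Y (α + 1) (by rw [hγ]; push_cast; ring)
      (hc.mono (by omega)) (fun j hj => hu j (by omega))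
      fun p q hpq hle => (hden (p + 1) q (by omega) (by push_cast; omega)).of_succ_left
    have hdown := ih (c := c) (γ := γ) (e := e + 1) (thetaVec τ r e :: Y) (α + 1)
      (by rw [hγ, List.length_cons]; push_cast; ring) (hc.mono (by rw [List.length_cons]; omega))
      (fun j hj => hu j (by rw [List.length_cons] at hj; omega))
      fun p q hpq hle => (hden p (q + 1) (by omega)
        (by rw [List.length_cons] at hle; push_cast at *; omega)).of_succ_right
    have hpascal := sum_antidiagonal_succ_Cnk_mul hτ hr n α
      (fun p q => pathSum τ r u d (thetaBlock τ r q e ++ Y) (c + p)) hsub fun p q hpq hX =>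
        hden p q hpq (not_lt.mp fun hlt => hX (pathSum_thetaBlock_append_eq_zero _ _ _ hlt))
    rw [pathSum_thetaBlock_succ_append hτ hr n Y α (by rw [hγ]; push_cast; ring) hc
      (hu _ (by omega)) hsub hfirst.br_add_ne_zero, hup, hdown, hpascal]
    refine congrArg₂ _ (congrArg _ (sum_congr rfl fun x _ => ?_))
      (congrArg _ (sum_congr rfl fun x hx => ?_))
    · rw [Nat.cast_succ, add_assoc, add_comm (1 : ℤ)]
    · have := mem_antidiagonal.mp hx
      rw [pathSum_thetaBlock_append_cons hτ hr _ _ _ _ (hc.mono (by omega)), thetaBlock_succ,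
        List.cons_append]

lemma pathSum_thetaBlock_succ (hτ : 0 < τ.im) (hr : r ≠ 0) (K : ℕ) (β : ℂ)
    (hγ : γ = (c - u - K) / 2) (he : e = (-c - u - K) / 2) (hc : br τ r c ≠ 0)
    (hu : br τ r (u + K) ≠ 0) :
    pathSum τ r u d (thetaBlock τ r (K + 1) β) c =
      br τ r (β - e) * br τ r (β + e) / (br τ r (γ - e) * br τ r (γ + e)) *
        pathSum τ r u d (thetaBlock τ r K (β + 1)) (c + 1) -
      br τ r (β - γ) * br τ r (β + γ) / (br τ r (γ - e) * br τ r (γ + e)) *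
        pathSum τ r u d (thetaBlock τ r K (β + 1)) (c - 1) := by
  have hsub : br τ r (γ - e) ≠ 0 := by rwa [show γ - e = c by rw [hγ, he]; ring]
  have hadd : br τ r (γ + e) ≠ 0 := by
    rw [show γ + e = -(u + K) by rw [hγ, he]; ring, br_neg hτ hr]
    exact neg_ne_zero.mpr hu
  rw [thetaBlock_succ, pathSum_thetaVec_cons_expand hτ hr _ β hsub hadd,
    pathSum_thetaVec_cons_up hτ hr _ (by rw [hγ, length_thetaBlock]) hc
      (by rwa [length_thetaBlock]),
    pathSum_thetaVec_cons_down hτ hr _ (by rw [he, length_thetaBlock]) hc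
      (by rwa [length_thetaBlock])]

theorem pathSum_thetaBlock (hτ : 0 < τ.im) (hr : r ≠ 0) {K p q : ℕ} (hK : p + q = K)
    (hd : d = c + p - q) (β : ℂ) (hγ : γ = (c - u - K + 1) / 2) (he : e = (-c - u - K + 1) / 2)
    (hc : BrNeZeroNear τ r c K) (hu : ∀ j : ℕ, j < K → br τ r (u + j) ≠ 0)
    (hden : CdenomNZ τ r (p + q) p γ e) :
    pathSum τ r u d (thetaBlock τ r K β) c = Cnk τ r (p + q) p β γ e := by
  induction K generalizing p q c β γ e with
  | zero =>
    obtain ⟨rfl, rfl⟩ := Nat.add_eq_zero_iff.mp hK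
    simp [pathSum, thetaBlock, Cnk, brF_zero, hd]
  | succ K ih =>
    push_cast at hγ he
    rw [pathSum_thetaBlock_succ hτ hr K β (γ := γ) (e := e) (by rw [hγ]; ring) (by rw [he]; ring)
      hc.br_ne_zero (hu K K.lt_succ_self)]
    have hup : ∀ p', p = p' + 1 → pathSum τ r u d (thetaBlock τ r K (β + 1)) (c + 1) =
        Cnk τ r (p' + q) p' (β + 1) (γ + 1) e := by
      rintro p' rfl
      exact ih (by omega) (by omega) (β + 1) (by rw [hγ]; push_cast; ring)
        (by rw [he]; push_cast; ring) (hc.mono (by omega)) (fun j hj => hu j (by omega))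
        hden.of_succ_left
    have hdown : ∀ q', q = q' + 1 → pathSum τ r u d (thetaBlock τ r K (β + 1)) (c - 1) =
        Cnk τ r (p + q') p (β + 1) γ (e + 1) := by
      rintro q' rfl
      exact ih (by omega) (by omega) (β + 1) (by rw [hγ]; push_cast; ring)
        (by rw [he]; push_cast; ring) (hc.mono (by omega)) (fun j hj => hu j (by omega))
        hden.of_succ_right
    have hunreach : ∀ c' : ℤ, K < (c' - d).natAbs →
        pathSum τ r u d (thetaBlock τ r K (β + 1)) c' = 0 := fun c' h =>
      pathSum_eq_zero_of_length_lt _ (by rwa [length_thetaBlock])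
    rcases p with _ | p <;> rcases q with _ | q
    · omega
    · rw [hdown q rfl, hunreach (c + 1) (by omega)]
      simp only [zero_add]
      rw [Cnk_succ_zero hτ hr q β (cdenomNZ_add.mp hden).2.1]
      ring
    · rw [hup p rfl, hunreach (c - 1) (by omega)]
      simp only [add_zero]
      rw [Cnk_succ_self p β (cdenomNZ_add.mp hden).1]
      ring
    · rw [hup p rfl, hdown q rfl, Cnk_succ_add_succ hτ hr β hden]
      rw [show γ - e = c by rw [hγ, he]; ring]
      exact hc.br_ne_zero

lemma pathSum_thetaBlock_append_comm (hτ : 0 < τ.im) (hr : r ≠ 0) (p q : ℕ) (β : ℂ)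
    (hc : BrNeZeroNear τ r c (p + q)) :
    pathSum τ r u d (thetaBlock τ r q (β + p) ++ thetaBlock τ r p β) c =
      pathSum τ r u d (thetaBlock τ r (p + q) β) c := by
  rw [thetaBlock_add]
  exact pathSum_perm hτ hr List.perm_append_comm (hc.mono (by simp [add_comm]))

theorem pathSum_thetaBlock_append_thetaBlock (hτ : 0 < τ.im) (hr : r ≠ 0) {k n m : ℕ}
    (hn : n ≤ k) (hm : m ≤ k) (hcd : c - d = k - 2 * m) (α β : ℂ) {δ : ℂ}
    (hγ : γ = (-u + c - k + 1) / 2) (hδ : δ = (-u - c - k + 1) / 2)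
    (hc : BrNeZeroNear τ r c k) (hu : ∀ j : ℕ, j < k → br τ r (u + j) ≠ 0)
    (hR : RdenomNZ τ r k n m β γ δ) :
    pathSum τ r u d (thetaBlock τ r n α ++ thetaBlock τ r (k - n) β) c =
      Rnm τ r k n m α β γ δ := by
  have hlen : n + (thetaBlock τ r (k - n) β).length = k := by rw [length_thetaBlock]; omega
  have hlen' : (n : ℂ) + (thetaBlock τ r (k - n) β).length = k := by exact_mod_cast hlen
  rw [pathSum_thetaBlock_append hτ hr n _ α (γ := γ) (e := β + k - n) (by rw [hγ, hlen']; ring)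
      (by rwa [hlen]) (by rwa [hlen]), Nat.sum_antidiagonal_eq_sum_range_succ_mk, Rnm]
  · symm
    refine sum_subset_zero_on_sdiff (range_mono (by omega)) (fun j hj => ?_) fun j hj => ?_
    · simp only [mem_sdiff, mem_range] at hj
      rw [pathSum_thetaBlock_append_eq_zero _ _ _ (by rw [length_thetaBlock]; omega), mul_zero]
    · have hj' : j ≤ min n m := by simpa [Nat.lt_succ_iff] using hj
      have hsplit : m - j + (k - m) = k - j := by omega
      have hsum : k - n + (n - j) = k - j := by omega
      have hkj : ((k - j : ℕ) : ℂ) = k - j := Nat.cast_sub (by omega)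
      rw [add_sub_assoc, ← Nat.cast_sub hn, pathSum_thetaBlock_append_comm hτ hr _ _ _
          (hc.mono (by omega)), hsum,
        pathSum_thetaBlock hτ hr hsplit (by omega) β (γ := γ + j) (e := δ)
          (by rw [hγ, hkj]; push_cast; ring) (by rw [hδ, hkj]; push_cast; ring)
          (hc.mono (by omega)) (fun i hi => hu i (by omega)) (by rw [hsplit]; exact (hR j hj').2),
        hsplit, Nat.add_sub_of_le (by omega)]
  · intro p q hpq hle
    subst hpq
    simpa using (hR p (by rw [length_thetaBlock] at hle; omega)).1

end BinomialTheorem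

section SignSequences

lemma sum_fin_succ_bool {M : Type*} [AddCommMonoid M] {k : ℕ} (f : (Fin (k + 1) → Bool) → M) :
    ∑ ε, f ε =
      ∑ ε : Fin k → Bool, f (Fin.cons true ε) + ∑ ε : Fin k → Bool, f (Fin.cons false ε) := by
  rw [← (Fin.consEquiv fun _ => Bool).sum_comp, Fintype.sum_prod_type, Fintype.sum_bool]
  rfl

lemma sum_map_sg (L : List Bool) : (L.map sg).sum = L.count true - L.count false := by
  induction L with
  | nil => simp
  | cons b L ih => cases b <;> simp [ih, sg] <;> ring

lemma perm_of_sum_map_sg_eq {L L' : List Bool} (hlen : L.length = L'.length)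
    (hsum : (L.map sg).sum = (L'.map sg).sum) : L.Perm L' := by
  rw [sum_map_sg, sum_map_sg] at hsum
  have hL := L.count_true_add_count_false
  have hL' := L'.count_true_add_count_false
  refine List.perm_iff_count.2 fun b => ?_
  cases b <;> omega

lemma perm_ofFn_of_sum_sg_eq {k : ℕ} {ε ε' : Fin k → Bool}
    (h : ∑ j, sg (ε j) = ∑ j, sg (ε' j)) : (List.ofFn ε).Perm (List.ofFn ε') :=
  perm_of_sum_map_sg_eq (by simp) (by simpa [List.map_ofFn, List.sum_ofFn] using h)

lemma sum_sg_decide_lt (p q : ℕ) :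
    ∑ j : Fin (p + q), sg (decide ((j : ℕ) < p)) = (p : ℤ) - q := by
  simp [Fin.sum_univ_add, sg, sub_eq_add_neg]

lemma sum_sg_eq_sub_card {k : ℕ} (ε : Fin k → Bool) :
    ∑ j, sg (ε j) = (k : ℤ) - 2 * #{j | ε j = false} := by
  have hsg : ∀ b, sg b = 1 - 2 * if b = false then 1 else 0 := by decide
  simp only [hsg, sum_sub_distrib, ← mul_sum, sum_boole]
  simp

lemma sum_range_sum_filter_sum_sg {M : Type*} [AddCommMonoid M] {k : ℕ}
    (f : (Fin k → Bool) → M) :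
    ∑ i ∈ range (k + 1), ∑ ε with ∑ j, sg (ε j) = (k : ℤ) - 2 * i, f ε = ∑ ε, f ε := by
  have hiff : ∀ (ε : Fin k → Bool) (i : ℕ),
      ∑ j, sg (ε j) = (k : ℤ) - 2 * i ↔ #{j | ε j = false} = i := fun ε i => by
    rw [sum_sg_eq_sub_card]
    omega
  simp only [hiff]
  exact sum_fiberwise_of_maps_to
    (fun ε _ => mem_range_succ_iff.2 (card_finset_fin_le _)) f

end SignSequences

section FusedVectors

variable {τ : ℂ} {r : ℝ} {u : ℂ} {c d : ℤ}

lemma spath_zero {k : ℕ} (a : ℤ) (δ : Fin k → Bool) : spath k a δ 0 = a := by simp [spath]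

lemma spath_cons {k : ℕ} (a : ℤ) (b : Bool) (δ : Fin k → Bool) (j : ℕ) :
    spath (k + 1) a (Fin.cons b δ) (j + 1) = spath k (a + sg b) δ j := by
  simp only [spath, sum_range_succ', Nat.succ_lt_succ_iff, Nat.zero_lt_succ, dite_true]
  rw [add_comm _ (sg _), ← add_assoc]
  rfl

lemma prod_psiStar_spath_cons {k : ℕ} (ε : Fin (k + 1) → Bool) (b : Bool) (δ : Fin k → Bool) :
    ∏ j : Fin (k + 1), psiStar τ r (u + (k + 1 : ℕ) - (j + 1 : ℕ)) (sg (ε j))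
        (spath (k + 1) c (Fin.cons b δ) (j + 1)) (spath (k + 1) c (Fin.cons b δ) j) =
      stepWeight τ r (u + k) c (sg b) (stdVec (ε 0)) *
        ∏ j : Fin k, psiStar τ r (u + k - (j + 1 : ℕ)) (sg (ε j.succ))
          (spath k (c + sg b) δ (j + 1)) (spath k (c + sg b) δ j) := by
  have hparam : ∀ j : ℕ, u + (k + 1 : ℕ) - (j + 1 : ℕ) = u + k - j := fun j => by
    push_cast
    ring
  rw [Fin.prod_univ_succ]
  simp only [hparam, Fin.val_zero, Fin.val_succ, spath_cons, spath_zero,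
    psiStar_sg_eq_stepWeight, Nat.cast_zero, sub_zero]

lemma sum_prod_psiStar_spath {k : ℕ} (ε : Fin k → Bool) :
    ∑ δ : Fin k → Bool with ∑ j, sg (δ j) = d - c,
        ∏ j : Fin k, psiStar τ r (u + k - (j + 1 : ℕ)) (sg (ε j))
          (spath k c δ (j + 1)) (spath k c δ j) =
      pathSum τ r u d (List.ofFn fun j => stdVec (ε j)) c := by
  simp only [sum_filter]
  induction k generalizing c with
  | zero => simp [pathSum, sub_eq_zero, eq_comm]
  | succ k ih =>
    have hsum : ∀ (b : Bool) (δ : Fin k → Bool),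
        ∑ j, sg ((Fin.cons b δ : Fin (k + 1) → Bool) j) = d - c ↔
          ∑ j, sg (δ j) = d - (c + sg b) := fun b δ => by
      simp only [Fin.sum_univ_succ, Fin.cons_zero, Fin.cons_succ]
      omega
    simp only [sum_fin_succ_bool, prod_psiStar_spath_cons, hsum, ← mul_ite_zero, ← mul_sum, ih,
      List.ofFn_succ, pathSum, List.length_ofFn]
    rfl

theorem pathSum_ofFn_eq_sum {k : ℕ} (w : Fin k → ℂ × ℂ) :
    pathSum τ r u d (List.ofFn w) c =
      ∑ ε : Fin k → Bool, (∏ j, coord (ε j) (w j)) *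
        pathSum τ r u d (List.ofFn fun j => stdVec (ε j)) c := by
  induction k generalizing c with
  | zero => simp
  | succ k ih =>
    have hcons : ∀ b, pathSum τ r u d (stdVec b :: List.ofFn fun j : Fin k => w j.succ) c =
        ∑ ε : Fin k → Bool, (∏ j, coord (ε j) (w j.succ)) *
          pathSum τ r u d (stdVec b :: List.ofFn fun j => stdVec (ε j)) c := fun b => by
      simp only [pathSum, ih fun j => w j.succ, List.length_ofFn, mul_sum, ← sum_add_distrib]
      exact sum_congr rfl fun ε _ => by ring
    rw [List.ofFn_succ, ← coord_smul_stdVec_add (w 0), pathSum_cons_add, pathSum_cons_smul,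
      pathSum_cons_smul, hcons, hcons, sum_fin_succ_bool]
    simp only [List.ofFn_succ, Fin.prod_univ_succ, Fin.cons_zero, Fin.cons_succ, mul_assoc, mul_sum]

/-- Fusion: the particular sign sequence chosen in `ψ*^{(k)}_μ` is irrelevant. -/
theorem psiStarF_eq_pathSum (hτ : 0 < τ.im) (hr : r ≠ 0) {k i m : ℕ} (hi : i ≤ k) (hm : m ≤ k)
    (hcd : c - d = k - 2 * m) (hc : BrNeZeroNear τ r c k) {ε : Fin k → Bool}
    (hε : ∑ j, sg (ε j) = (k : ℤ) - 2 * i) :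
    psiStarF τ r k (k - 2 * i) u d c = pathSum τ r u d (List.ofFn fun j => stdVec (ε j)) c := by
  obtain ⟨p, rfl⟩ := Nat.exists_eq_add_of_le' hi
  have hadm : adm (p + i) c d := by unfold adm; omega
  have hthreshold : ∀ j : Fin (p + i),
      (if (j + 1 : ℤ) ≤ (((p + i : ℕ) : ℤ) + ((p + i : ℕ) - 2 * i)) / 2 then (1 : ℤ) else -1) =
        sg (decide ((j : ℕ) < p)) := fun j => by
    simp only [sg, decide_eq_true_eq]
    exact if_congr (by omega) rfl rfl
  have hperm : (List.ofFn fun j : Fin (p + i) => stdVec (decide ((j : ℕ) < p))).Perm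
      (List.ofFn fun j => stdVec (ε j)) := by
    have hbool := perm_ofFn_of_sum_sg_eq (ε := fun j : Fin (p + i) => decide ((j : ℕ) < p))
      (ε' := ε) (by rw [sum_sg_decide_lt, hε]; push_cast; ring)
    simpa only [List.map_ofFn, Function.comp_def] using hbool.map stdVec
  rw [psiStarF, if_pos hadm]
  simp only [hthreshold]
  rw [sum_prod_psiStar_spath]
  exact pathSum_perm hτ hr hperm (by simpa using hc)

/-- The theta vector whose components are those of the `j`-th intertwining vector along the
canonical path from `a` with `n` up steps. -/
def canonicalVec (τ : ℂ) (r : ℝ) (u : ℂ) (k : ℕ) (a : ℤ) (n j : ℕ) : ℂ × ℂ :=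
  if j < n then thetaVec τ r ((-u + a - k + 1) / 2 + j)
  else thetaVec τ r ((-u - a - k + 1) / 2 + (j - n : ℕ))

lemma psi_cpathZ (hτ : 0 < τ.im) (k : ℕ) (a : ℤ) (n j : ℕ) (b : Bool) :
    psi τ r (u + k - (j + 1 : ℕ)) (sg b) (cpathZ a n j) (cpathZ a n (j + 1)) =
      coord b (canonicalVec τ r u k a n j) := by
  rw [psi_sg_eq_coord, canonicalVec]
  split_ifs with hj
  · rw [cpathZ, cpathZ, if_pos (by omega), if_pos (by omega)]
    congr 2
    push_cast
    ring
  · have hpeak : cpathZ a n j = a + 2 * n - j := by rw [cpathZ]; split_ifs <;> omega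
    have hdown : cpathZ a n (j + 1) = a + 2 * n - j - 1 := by
      rw [cpathZ, if_neg (by omega)]
      omega
    rw [hpeak, hdown, ← thetaVec_neg hτ]
    congr 2
    push_cast [Nat.le_of_not_lt hj]
    ring

lemma ofFn_canonicalVec {k n : ℕ} (hn : n ≤ k) (a : ℤ) :
    (List.ofFn fun j : Fin k => canonicalVec τ r u k a n j) =
      thetaBlock τ r n ((-u + a - k + 1) / 2) ++
        thetaBlock τ r (k - n) ((-u - a - k + 1) / 2) := by
  refine List.ext_getElem (by simp [hn]) fun j _ _ => ?_
  simp only [List.getElem_ofFn, List.getElem_append, length_thetaBlock, canonicalVec]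
  split_ifs <;> simp [thetaBlock]

lemma psiF_eq_sum_prod_coord (hτ : 0 < τ.im) {k n : ℕ} (hn : n ≤ k) {a b : ℤ}
    (hab : a - b = k - 2 * n) (μ : ℤ) :
    psiF τ r k μ u a b = ∑ ε : Fin k → Bool with ∑ j, sg (ε j) = μ,
      ∏ j, coord (ε j) (canonicalVec τ r u k a n j) := by
  have hadm : adm k a b := by unfold adm; omega
  have hupSteps : ((k : ℤ) - (a - b)) / 2 = n := by omega
  rw [psiF, if_pos hadm, hupSteps]
  simp only [psi_cpathZ hτ]

theorem sum_psiStarF_mul_psiF (hτ : 0 < τ.im) (hr : r ≠ 0) {k n m : ℕ} (hn : n ≤ k) (hm : m ≤ k)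
    {a b : ℤ} (hab : a - b = k - 2 * n) (hcd : c - d = k - 2 * m) (hc : BrNeZeroNear τ r c k) :
    ∑ i ∈ range (k + 1), psiStarF τ r k (k - 2 * i) u d c * psiF τ r k (k - 2 * i) u a b =
      pathSum τ r u d (thetaBlock τ r n ((-u + a - k + 1) / 2) ++
        thetaBlock τ r (k - n) ((-u - a - k + 1) / 2)) c := by
  rw [← ofFn_canonicalVec hn, pathSum_ofFn_eq_sum, ← sum_range_sum_filter_sum_sg]
  refine sum_congr rfl fun i hi => ?_
  rw [psiF_eq_sum_prod_coord hτ hn hab, mul_sum]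
  refine sum_congr rfl fun ε hε => ?_
  rw [psiStarF_eq_pathSum hτ hr (mem_range_succ_iff.1 hi) hm hcd hc (mem_filter.1 hε).2, mul_comm]

end FusedVectors

theorem sixj_via_intertwiners_general {τ : ℂ} {r : ℝ} (hτ : 0 < τ.im) (hr : r ≠ 0) {k n m : ℕ}
    (hn : n ≤ k) (hm : m ≤ k) {a b c d : ℤ} (hab : a - b = k - 2 * n) (hcd : c - d = k - 2 * m)
    {u : ℂ} (hc : BrNeZeroNear τ r c k) (hu : ∀ j : ℕ, j < k → br τ r (u + j) ≠ 0)
    (hR : RdenomNZ τ r k n m ((-u - a - k + 1) / 2) ((-u + c - k + 1) / 2)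
      ((-u - c - k + 1) / 2)) :
    ∑ i ∈ range (k + 1), psiStarF τ r k (k - 2 * i) u d c * psiF τ r k (k - 2 * i) u a b =
      Rnm τ r k n m ((-u + a - k + 1) / 2) ((-u - a - k + 1) / 2) ((-u + c - k + 1) / 2)
        ((-u - c - k + 1) / 2) := by
  rw [sum_psiStarF_mul_psiF hτ hr hn hm hab hcd hc]
  exact pathSum_thetaBlock_append_thetaBlock hτ hr hn hm hcd _ _ rfl rfl hc hu hR

/-- Elliptic 6j-symbols via intertwining vectors. -/
theorem sixj_via_intertwiners (τ : ℂ) (r : ℝ) (hτ : 0 < τ.im) (hr : 0 < r)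
    (hirr : Irrational r) (k n m : ℕ) (hk : 1 ≤ k) (hn : n ≤ k) (hm : m ≤ k)
    (a b c d : ℤ) (hab : a - b = (k : ℤ) - 2 * n) (hcd : c - d = (k : ℤ) - 2 * m)
    (hmin : (k : ℤ) < min c d) (u : ℂ)
    (hc : ∀ s : ℤ, |s - c| ≤ (k : ℤ) → br τ r (s : ℂ) ≠ 0)
    (hu : ∀ j : ℕ, j < k → br τ r (u + (j : ℂ)) ≠ 0)
    (hR : RdenomNZ τ r k n m ((-u - (a : ℂ) - (k : ℂ) + 1) / 2)
      ((-u + (c : ℂ) - (k : ℂ) + 1) / 2) ((-u - (c : ℂ) - (k : ℂ) + 1) / 2)) :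
    ∑ i ∈ Finset.range (k + 1),
        psiStarF τ r k ((k : ℤ) - 2 * (i : ℤ)) u d c *
          psiF τ r k ((k : ℤ) - 2 * (i : ℤ)) u a b =
      Rnm τ r k n m ((-u + (a : ℂ) - (k : ℂ) + 1) / 2) ((-u - (a : ℂ) - (k : ℂ) + 1) / 2)
        ((-u + (c : ℂ) - (k : ℂ) + 1) / 2) ((-u - (c : ℂ) - (k : ℂ) + 1) / 2) :=
  sixj_via_intertwiners_general hτ hr.ne' hn hm hab hcd hc hu hR

end Ell
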